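/- arXiv:1703.00252 — 2 statements merged into one kernel-verified Lean document; each statement's English description precedes it below -/
import Mathlib

section
/- Let Ω ⊂ ℝ^N be a bounded open set, Ω_J = Ω + supp J, assume J satisfies hypothesis (J) and G satisfies hypothesis (G). Then for every initial datum u₀ ∈ C(Ω̄) with u₀ ≥ 0, the regular solution u of the homogeneous Dirichlet problem ∂u/∂t(x,t) = ∫_{Ω_J} J(x−y)(u(y,t)−u(x,t)) G(x, u(y,t)−u(x,t)) dy in Ω̄ × (0,∞), u(x,t) = 0 in (Ω_J \ Ω̄) × (0,∞), u(x,0) = u₀(x) in Ω̄, satisfies lim_{t→∞} u(·,t) = 0 uniformly on Ω̄. -/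
/-!
Positive multiples of `exp (-c t) p(x)`, with `p = B - exp (-φ)` for a steep linear form `φ`, are
supersolutions of every nonlocal Dirichlet problem whose flux `ψ` satisfies `a s ≤ ψ s ≤ b s` for
`s ≥ 0` and `b s ≤ ψ s ≤ a s` for `s ≤ 0`: the maximal such flux `max (a s) (b s)` bounds the
operator, and convexity of the exponential makes its value at `p` as negative as desired. If the
maximum `S` of `u exp (c t) / p` over a time interval were larger than the initial maximum, then
`v = S exp (-c t) p` would touch `u` from above; but `v - u` satisfies `w' ≥ -β w` at almost every
point, so it stays bounded away from zero. The same barrier controls `-u`.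
-/

open MeasureTheory Set Filter Topology Pointwise

noncomputable section

/-- Hypothesis (J): nonnegative, radially symmetric, continuous, compactly supported,
integral one, finite second moments. -/
def HypJ (N : ℕ) (J : (Fin N → ℝ) → ℝ) : Prop :=
  (∀ z, 0 ≤ J z) ∧
  (∀ z w : Fin N → ℝ, (∑ i, z i ^ 2) = (∑ i, w i ^ 2) → J z = J w) ∧
  Continuous J ∧ HasCompactSupport J ∧
  (∫ z, J z) = 1 ∧
  ∀ i : Fin N, Integrable fun z : Fin N → ℝ => J z * z i ^ 2

/-- Hypothesis (G): Carathéodory function with the strong monotonicity condition. -/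
def HypG (N : ℕ) (G : (Fin N → ℝ) → ℝ → ℝ) : Prop :=
  (∀ s : ℝ, Measurable fun x : Fin N → ℝ => G x s) ∧
  (∀ᵐ x : Fin N → ℝ, Continuous fun s : ℝ => G x s) ∧
  ∃ α₁ α₂ : ℝ, 0 < α₁ ∧ α₁ ≤ α₂ ∧
    ∀ᵐ x : Fin N → ℝ, ∀ s σ : ℝ, σ < s →
      α₁ * (s - σ) ≤ G x s * s - G x σ * σ ∧ G x s * s - G x σ * σ ≤ α₂ * (s - σ)

/-- A regular solution, on the whole time half-line, of the homogeneous nonlocal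
Dirichlet problem with initial datum `u₀`: a continuous curve in `C(Ω̄)` satisfying the
integral equation for every `x ∈ Ω̄` and `t > 0`, vanishing on `Ω_J \ Ω̄`, and attaining
the initial datum uniformly on `Ω̄`. -/
def RegularSolutionHom (N : ℕ) (J : (Fin N → ℝ) → ℝ) (G : (Fin N → ℝ) → ℝ → ℝ)
    (Ω : Set (Fin N → ℝ)) (u₀ : (Fin N → ℝ) → ℝ) (u : (Fin N → ℝ) → ℝ → ℝ) : Prop :=
  ContinuousOn (fun p : (Fin N → ℝ) × ℝ => u p.1 p.2) (closure Ω ×ˢ Ici (0 : ℝ)) ∧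
  (∀ x ∈ closure Ω, ∀ t ∈ Ioi (0 : ℝ),
    u x t = (∫ τ in Ioc (0 : ℝ) t, ∫ y in Ω + tsupport J,
      J (x - y) * (u y τ - u x τ) * G x (u y τ - u x τ)) + u₀ x) ∧
  (∀ y ∈ (Ω + tsupport J) \ closure Ω, ∀ t ∈ Ioi (0 : ℝ), u y t = 0) ∧
  TendstoUniformlyOn (fun t x => u x t) u₀ (𝓝[Ioi (0 : ℝ)] 0) (closure Ω)

section Pucci

/-- The maximal flux `max (a s) (b s)` with ellipticity constants `a ≤ b`; the nonlocal operator it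
generates is the Pucci-type extremal operator of the problem. -/
def pucciFlux (a b s : ℝ) : ℝ := max (a * s) (b * s)

/-- Elliptic fluxes: continuous functions lying between the lines of slopes `a` and `b` through the
origin. The flux of the paper's problem is `s ↦ G(x, s) s`. -/
structure IsEllipticFlux (a b : ℝ) (ψ : ℝ → ℝ) : Prop where
  continuous : Continuous ψ
  mem_uIcc : ∀ s, ψ s ∈ uIcc (a * s) (b * s)

variable {a b : ℝ}

lemma continuous_pucciFlux : Continuous (pucciFlux a b) := by
  unfold pucciFlux
  fun_prop

lemma pucciFlux_mul {k : ℝ} (hk : 0 ≤ k) (s : ℝ) :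
    pucciFlux a b (k * s) = k * pucciFlux a b s := by
  simp only [pucciFlux, mul_max_of_nonneg _ _ hk, mul_left_comm k]

lemma pucciFlux_le_add (ha : 0 ≤ a) (hab : a ≤ b) {s σ d : ℝ} (hd : 0 ≤ d) (hs : s ≤ σ + d) :
    pucciFlux a b s ≤ pucciFlux a b σ + b * d := by
  refine max_le ?_ ?_
  · calc a * s ≤ a * σ + a * d := by rw [← mul_add]; gcongr
      _ ≤ pucciFlux a b σ + b * d := by gcongr; exact le_max_left _ _
  · calc b * s ≤ b * σ + b * d := by rw [← mul_add]; gcongr; exact ha.trans hab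
      _ ≤ pucciFlux a b σ + b * d := by gcongr; exact le_max_right _ _

lemma pucciFlux_one_sub_le (hab : a ≤ b) {w : ℝ} (hw : 0 ≤ w) :
    pucciFlux a b (1 - w) ≤ b - a * w :=
  max_le (by linarith) (by linarith [mul_le_mul_of_nonneg_right hab hw])

lemma IsEllipticFlux.le_pucciFlux {ψ : ℝ → ℝ} (hψ : IsEllipticFlux a b ψ) (s : ℝ) :
    ψ s ≤ pucciFlux a b s :=
  (hψ.mem_uIcc s).2

lemma IsEllipticFlux.neg_comp_neg {ψ : ℝ → ℝ} (hψ : IsEllipticFlux a b ψ) :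
    IsEllipticFlux a b fun s => -ψ (-s) where
  continuous := (hψ.continuous.comp continuous_neg).neg
  mem_uIcc s := by
    have h := hψ.mem_uIcc (-s)
    simp only [mul_neg, Set.mem_uIcc] at h ⊢
    grind

end Pucci

section Gronwall

lemma hasDerivAt_exp_mul (k r : ℝ) :
    HasDerivAt (fun r => Real.exp (k * r)) (Real.exp (k * r) * k) r := by
  simpa using ((hasDerivAt_id r).const_mul k).exp

lemma exp_neg_mul_mul_le_of_hasDerivAt {w w' : ℝ → ℝ} {β T : ℝ} (hw : ContinuousOn w (Icc 0 T))
    (hw' : ∀ t ∈ Ioo 0 T, HasDerivAt w (w' t) t) (hle : ∀ t ∈ Ioo 0 T, -β * w t ≤ w' t)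
    {t : ℝ} (ht : t ∈ Icc 0 T) : Real.exp (-β * t) * w 0 ≤ w t := by
  have hmono : MonotoneOn (fun r => Real.exp (β * r) * w r) (Icc 0 T) := by
    refine monotoneOn_of_hasDerivWithinAt_nonneg (convex_Icc 0 T)
      ((by fun_prop : Continuous fun r => Real.exp (β * r)).continuousOn.mul hw)
      (f' := fun r => Real.exp (β * r) * β * w r + Real.exp (β * r) * w' r) ?_ ?_ <;>
      rw [interior_Icc] <;> intro r hr
    · exact ((hasDerivAt_exp_mul β r).mul (hw' r hr)).hasDerivWithinAt
    · have := mul_nonneg (Real.exp_pos (β * r)).le (sub_nonneg.2 (hle r hr))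
      linarith
  have h0 : w 0 ≤ Real.exp (β * t) * w t := by
    simpa using hmono ⟨le_rfl, ht.1.trans ht.2⟩ ht ht.1
  calc Real.exp (-β * t) * w 0 ≤ Real.exp (-β * t) * (Real.exp (β * t) * w t) := by gcongr
    _ = w t := by rw [← mul_assoc, ← Real.exp_add]; simp

lemma tendstoUniformlyOn_zero_of_abs_le_exp {X : Type*} {s : Set X} {u : X → ℝ → ℝ} {C c : ℝ}
    (hc : 0 < c) (h : ∀ x ∈ s, ∀ t, 0 ≤ t → |u x t| ≤ C * Real.exp (-c * t)) :
    TendstoUniformlyOn (fun t x => u x t) (fun _ => (0 : ℝ)) atTop s := by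
  have hlim : Tendsto (fun t => C * Real.exp (-c * t)) atTop (𝓝 0) := by
    simpa using (Real.tendsto_exp_atBot.comp
      (tendsto_id.const_mul_atTop_of_neg (neg_lt_zero.2 hc))).const_mul C
  rw [Metric.tendstoUniformlyOn_iff]
  intro ε hε
  filter_upwards [hlim.eventually (gt_mem_nhds hε), eventually_ge_atTop 0] with t ht ht0 x hx
  rw [dist_comm, Real.dist_eq, sub_zero]
  exact (h x hx t ht0).trans_lt ht

end Gronwall

section Support

lemma mem_sub_tsupport {E : Type*} [AddCommGroup E] [TopologicalSpace E] {J : E → ℝ} {Ω : Set E}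
    {x y : E} (hx : x ∈ Ω) (hJ : J (x - y) ≠ 0) :
    y ∈ Ω - tsupport J :=
  ⟨x, hx, x - y, subset_tsupport J hJ, sub_sub_cancel x y⟩

lemma tsupport_neg_of_even {E : Type*} [AddGroup E] [TopologicalSpace E] [ContinuousNeg E]
    {J : E → ℝ} (hJ : ∀ z, J (-z) = J z) : -tsupport J = tsupport J := by
  have h := tsupport_comp_eq_preimage J (Homeomorph.neg E)
  rwa [show J ∘ Homeomorph.neg E = J from funext hJ, Homeomorph.coe_neg, neg_preimage,
    eq_comm] at h

lemma closure_subset_closure_setOf_of_ae {X : Type*} [TopologicalSpace X] [MeasurableSpace X]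
    [OpensMeasurableSpace X] {μ : Measure X} [μ.IsOpenPosMeasure] {U : Set X} (hU : IsOpen U)
    {P : X → Prop} (hP : ∀ᵐ x ∂μ.restrict U, P x) :
    closure U ⊆ closure {x | x ∈ U ∧ P x} := by
  have hdense := Measure.dense_of_ae ((ae_restrict_iff' hU.measurableSet).1 hP)
  refine closure_minimal ((hdense.open_subset_closure_inter hU).trans ?_) isClosed_closure
  exact closure_mono fun x hx => ⟨hx.1, hx.2 hx.1⟩

end Support

section Definitions

/-- The profile `u(·, t)`, redefined to be zero outside `K`; it turns integrals over the collar of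
the Dirichlet problem into integrals over the whole space. -/
def zeroExt {E : Type*} (K : Set E) (u : E → ℝ → ℝ) (t : ℝ) : E → ℝ :=
  K.indicator fun y => u y t

lemma zeroExt_of_mem {E : Type*} {K : Set E} {u : E → ℝ → ℝ} {x : E} (hx : x ∈ K) (t : ℝ) :
    zeroExt K u t x = u x t :=
  indicator_of_mem hx _

variable {E : Type*} [NormedAddCommGroup E] [MeasurableSpace E]

/-- The nonlocal operator with kernel `J` and flux `ψ`. -/
def nonlocalFlux (μ : Measure E) (J : E → ℝ) (ψ : ℝ → ℝ) (f : E → ℝ) (x : E) : ℝ :=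
  ∫ y, J (x - y) * ψ (f y - f x) ∂μ

/-- Regular solutions of the homogeneous nonlocal Dirichlet problem with flux `g`. The points
interacting with `x ∈ Ω` are `x - supp J`, whence the difference `Ω - supp J`, which is `Ω_J` for
even `J`; the initial datum is `u(·, 0)`. -/
structure IsDirichletSolution (μ : Measure E) (J : E → ℝ) (g : E → ℝ → ℝ) (Ω : Set E)
    (u : E → ℝ → ℝ) : Prop where
  continuousOn : ContinuousOn (Function.uncurry u) (closure Ω ×ˢ Ici 0)
  eq_integral : ∀ x ∈ closure Ω, ∀ t, 0 < t → u x t = u x 0 +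
    ∫ τ in (0 : ℝ)..t, ∫ y in Ω - tsupport J, J (x - y) * g x (u y τ - u x τ) ∂μ
  eq_zero : ∀ y ∈ (Ω - tsupport J) \ closure Ω, ∀ t, 0 < t → u y t = 0

/-- Profiles `p` for which `exp (-c t) p(x)` is a supersolution of the Dirichlet problem for every
flux with ellipticity constants `a`, `b`. -/
structure IsDecayBarrier (μ : Measure E) (J : E → ℝ) (a b : ℝ) (Ω : Set E) (c : ℝ)
    (p : E → ℝ) : Prop where
  continuous : Continuous p
  one_le : ∀ y ∈ closure Ω ∪ (Ω - tsupport J), 1 ≤ p y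
  flux_le : ∀ x ∈ Ω, nonlocalFlux μ J (pucciFlux a b) p x ≤ -c * p x

lemma IsDirichletSolution.neg {μ : Measure E} {J : E → ℝ} {g : E → ℝ → ℝ} {Ω : Set E}
    {u : E → ℝ → ℝ} (hu : IsDirichletSolution μ J g Ω u) :
    IsDirichletSolution μ J (fun x s => -g x (-s)) Ω (fun x t => -u x t) where
  continuousOn := hu.continuousOn.neg
  eq_integral x hx t ht := by
    rw [hu.eq_integral x hx t ht]
    simp only [neg_add, neg_sub_neg, neg_sub, mul_neg, integral_neg, intervalIntegral.integral_neg]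
  eq_zero y hy t ht := by rw [hu.eq_zero y hy t ht, neg_zero]

end Definitions

section Flux

variable {E : Type*} [NormedAddCommGroup E] {K : Set E} {u : E → ℝ → ℝ} {ψ : ℝ → ℝ} {x : E}

lemma exists_bound_flux_zeroExt {s : Set ℝ} (hK : IsCompact K) (hs : IsCompact s)
    (hu : ContinuousOn (Function.uncurry u) (K ×ˢ s)) (hψ : Continuous ψ) (hx : x ∈ K) :
    ∃ D, ∀ t ∈ s, ∀ y, ‖ψ (zeroExt K u t y - zeroExt K u t x)‖ ≤ D := by
  have hux : ContinuousOn (u x) s := hu.uncurry_left x hx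
  obtain ⟨D₁, hD₁⟩ := (hK.prod hs).exists_bound_of_continuousOn
    (hψ.comp_continuousOn (hu.sub (hux.comp continuousOn_snd fun q hq => hq.2)))
  obtain ⟨D₂, hD₂⟩ := hs.exists_bound_of_continuousOn (hψ.comp_continuousOn hux.neg)
  refine ⟨max D₁ D₂, fun t ht y => ?_⟩
  rw [zeroExt_of_mem hx]
  by_cases hy : y ∈ K
  · rw [zeroExt_of_mem hy]
    exact (hD₁ (y, t) ⟨hy, ht⟩).trans (le_max_left _ _)
  · rw [zeroExt, indicator_of_notMem hy, zero_sub]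
    exact (hD₂ t ht).trans (le_max_right _ _)

lemma continuousOn_zeroExt {s : Set ℝ} (hu : ContinuousOn (Function.uncurry u) (K ×ˢ s)) (y : E) :
    ContinuousOn (fun t => zeroExt K u t y) s := by
  by_cases hy : y ∈ K
  · simpa only [zeroExt_of_mem hy] using hu.uncurry_left y hy
  · simpa only [zeroExt, indicator_of_notMem hy] using continuousOn_const

variable [MeasurableSpace E] {μ : Measure E} {J : E → ℝ}

lemma nonlocalFlux_le_pucciFlux_add {a b : ℝ} {f v : E → ℝ} (ha : 0 ≤ a) (hab : a ≤ b)
    (hJ : ∀ z, 0 ≤ J z) (hJint : Integrable (fun y => J (x - y)) μ)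
    (hψ : ∀ s, ψ s ≤ pucciFlux a b s)
    (hfint : Integrable (fun y => J (x - y) * ψ (f y - f x)) μ)
    (hvint : Integrable (fun y => J (x - y) * pucciFlux a b (v y - v x)) μ)
    (hfv : ∀ y, J (x - y) ≠ 0 → f y ≤ v y) (hfvx : f x ≤ v x) :
    nonlocalFlux μ J ψ f x ≤
      nonlocalFlux μ J (pucciFlux a b) v x + b * (∫ y, J (x - y) ∂μ) * (v x - f x) := by
  have hpoint (y : E) : J (x - y) * ψ (f y - f x) ≤
      J (x - y) * pucciFlux a b (v y - v x) + J (x - y) * (b * (v x - f x)) := by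
    rcases eq_or_ne (J (x - y)) 0 with h0 | h0
    · simp [h0]
    rw [← mul_add]
    refine mul_le_mul_of_nonneg_left ((hψ _).trans ?_) (hJ _)
    exact pucciFlux_le_add ha hab (sub_nonneg.2 hfvx) (by linarith [hfv y h0])
  calc nonlocalFlux μ J ψ f x
      ≤ ∫ y, J (x - y) * pucciFlux a b (v y - v x) + J (x - y) * (b * (v x - f x)) ∂μ :=
        integral_mono hfint (hvint.add (hJint.mul_const _)) hpoint
    _ = nonlocalFlux μ J (pucciFlux a b) v x + b * (∫ y, J (x - y) ∂μ) * (v x - f x) := by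
        rw [integral_add hvint (hJint.mul_const _), integral_mul_const, nonlocalFlux]
        ring

variable [BorelSpace E]

lemma aestronglyMeasurable_zeroExt {s : Set ℝ} (hK : IsCompact K)
    (hu : ContinuousOn (Function.uncurry u) (K ×ˢ s)) {t : ℝ} (ht : t ∈ s) :
    AEStronglyMeasurable (zeroExt K u t) μ :=
  (aestronglyMeasurable_indicator_iff hK.measurableSet).2
    ((hu.uncurry_right t ht).aestronglyMeasurable_of_isCompact hK hK.measurableSet)

lemma integrable_flux_zeroExt {s : Set ℝ} (hK : IsCompact K)
    (hu : ContinuousOn (Function.uncurry u) (K ×ˢ s)) (hψ : Continuous ψ)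
    (hJ : Integrable (fun y => J (x - y)) μ) (hx : x ∈ K) {t : ℝ} (ht : t ∈ s) :
    Integrable (fun y => J (x - y) * ψ (zeroExt K u t y - zeroExt K u t x)) μ := by
  obtain ⟨D, hD⟩ := exists_bound_flux_zeroExt hK isCompact_singleton
    (hu.mono (prod_mono_right (singleton_subset_iff.2 ht))) hψ hx
  exact hJ.mul_bdd (hψ.comp_aestronglyMeasurable
    ((aestronglyMeasurable_zeroExt hK hu ht).sub aestronglyMeasurable_const))
    (Eventually.of_forall (hD t rfl))

lemma continuousOn_nonlocalFlux_zeroExt (hK : IsCompact K)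
    (hu : ContinuousOn (Function.uncurry u) (K ×ˢ Ici 0)) (hψ : Continuous ψ)
    (hJ : Integrable (fun y => J (x - y)) μ) (hx : x ∈ K) :
    ContinuousOn (fun t => nonlocalFlux μ J ψ (zeroExt K u t) x) (Ici 0) := by
  intro t₀ ht₀
  obtain ⟨D, hD⟩ := exists_bound_flux_zeroExt hK (isCompact_Icc (a := 0) (b := t₀ + 1))
    (hu.mono (prod_mono_right (Icc_subset_Ici_self))) hψ hx
  have hnear : ∀ᶠ t in 𝓝[Ici 0] t₀, t ∈ Icc 0 (t₀ + 1) := by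
    filter_upwards [self_mem_nhdsWithin, mem_nhdsWithin_of_mem_nhds (Iic_mem_nhds (lt_add_one t₀))]
      with t h0 h1 using ⟨h0, h1⟩
  refine continuousWithinAt_of_dominated (bound := fun y => ‖J (x - y)‖ * D) ?_ ?_
    (hJ.norm.mul_const D) (Eventually.of_forall fun y => ?_)
  · filter_upwards [self_mem_nhdsWithin] with t ht
    exact (integrable_flux_zeroExt hK hu hψ hJ hx ht).aestronglyMeasurable
  · filter_upwards [hnear] with t ht
    refine Eventually.of_forall fun y => ?_
    rw [norm_mul]
    exact mul_le_mul_of_nonneg_left (hD t ht y) (norm_nonneg _)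
  · exact continuousOn_const.mul (hψ.comp_continuousOn
      ((continuousOn_zeroExt hu y).sub (continuousOn_zeroExt hu x))) t₀ ht₀

end Flux

section Barrier

variable {E : Type*} [NormedAddCommGroup E] [MeasurableSpace E] [BorelSpace E]
  {μ : Measure E} {J : E → ℝ} {a b : ℝ}

lemma integrable_kernel_mul [IsFiniteMeasureOnCompacts μ] (hJ : Continuous J)
    (hJs : HasCompactSupport J) {f : E → ℝ} (hf : Continuous f) (x : E) :
    Integrable (fun y => J (x - y) * f y) μ :=
  (by fun_prop : Continuous fun y => J (x - y) * f y).integrable_of_hasCompactSupport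
    (hJs.comp_homeomorph (Homeomorph.subLeft x)).mul_right

lemma integrable_mul_exp [NormedSpace ℝ E] [IsFiniteMeasureOnCompacts μ] (hJ : Continuous J)
    (hJs : HasCompactSupport J) (φ : StrongDual ℝ E) :
    Integrable (fun z => J z * Real.exp (φ z)) μ :=
  (by fun_prop : Continuous fun z => J z * Real.exp (φ z)).integrable_of_hasCompactSupport
    hJs.mul_right

lemma exists_dual_le_integral_mul_exp [NormedSpace ℝ E] [Nontrivial E] [μ.IsOpenPosMeasure]
    [IsFiniteMeasureOnCompacts μ] (hJ : Continuous J) (hJs : HasCompactSupport J)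
    (hJ0 : ∀ z, 0 ≤ J z) (hJne : J ≠ 0) (D : ℝ) :
    ∃ φ : StrongDual ℝ E, D ≤ ∫ z, J z * Real.exp (φ z) ∂μ := by
  obtain ⟨z₀, hz₀J, hz₀⟩ : (Function.support J ∩ {0}ᶜ).Nonempty :=
    (dense_compl_singleton (0 : E)).inter_open_nonempty _ hJ.isOpen_support
      (Function.support_nonempty_iff.2 hJne)
  obtain ⟨φ, hφ⟩ := SeparatingDual.exists_eq_one (R := ℝ) hz₀
  have hcont : Continuous fun z => J z * max (φ z) 0 := by fun_prop
  set m := ∫ z, J z * max (φ z) 0 ∂μ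
  have hm : 0 < m := hcont.integral_pos_of_hasCompactSupport_nonneg_nonzero (x := z₀) hJs.mul_right
    (fun z => mul_nonneg (hJ0 z) (le_max_right _ _)) (by simpa [hφ] using hz₀J)
  set l := max (D / m) 0
  have hexp (z : E) : l * max (φ z) 0 ≤ Real.exp ((l • φ) z) := by
    rw [mul_max_of_nonneg _ _ (le_max_right _ _), mul_zero]
    exact max_le ((lt_add_one _).le.trans (Real.add_one_le_exp _)) (Real.exp_pos _).le
  refine ⟨l • φ, ?_⟩
  calc D ≤ l * m := (div_le_iff₀ hm).1 (le_max_left _ _)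
    _ = ∫ z, l * (J z * max (φ z) 0) ∂μ := (integral_const_mul _ _).symm
    _ ≤ ∫ z, J z * Real.exp ((l • φ) z) ∂μ := by
      refine integral_mono ((hcont.integrable_of_hasCompactSupport hJs.mul_right).const_mul l)
        (integrable_mul_exp hJ hJs _) fun z => ?_
      rw [mul_left_comm]
      exact mul_le_mul_of_nonneg_left (hexp z) (hJ0 z)

variable [NormedSpace ℝ E] [FiniteDimensional ℝ E] [μ.IsAddHaarMeasure]

lemma nonlocalFlux_const_sub_exp_le (hJ : Continuous J) (hJs : HasCompactSupport J)
    (hJ0 : ∀ z, 0 ≤ J z) (hab : a ≤ b) (φ : StrongDual ℝ E) (B : ℝ) (x : E) :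
    nonlocalFlux μ J (pucciFlux a b) (fun y => B - Real.exp (-φ y)) x ≤
      Real.exp (-φ x) * (b * ∫ z, J z ∂μ - a * ∫ z, J z * Real.exp (φ z) ∂μ) := by
  set e := Real.exp (-φ x)
  have hJint : Integrable J μ := hJ.integrable_of_hasCompactSupport hJs
  have hJexp := integrable_mul_exp (μ := μ) hJ hJs φ
  have hincr (y : E) :
      B - Real.exp (-φ y) - (B - e) = e * (1 - Real.exp (φ (x - y))) := by
    rw [mul_sub, ← Real.exp_add, map_sub]
    ring_nf
  have hpoint (y : E) : J (x - y) * pucciFlux a b (B - Real.exp (-φ y) - (B - e)) ≤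
      e * (b * J (x - y) - a * (J (x - y) * Real.exp (φ (x - y)))) := by
    rw [hincr, pucciFlux_mul (Real.exp_pos _).le, mul_left_comm]
    gcongr
    linarith [mul_le_mul_of_nonneg_left (pucciFlux_one_sub_le hab (Real.exp_pos (φ (x - y))).le)
      (hJ0 (x - y))]
  calc nonlocalFlux μ J (pucciFlux a b) (fun y => B - Real.exp (-φ y)) x
      ≤ ∫ y, e * (b * J (x - y) - a * (J (x - y) * Real.exp (φ (x - y)))) ∂μ :=
        integral_mono
          (integrable_kernel_mul hJ hJs (continuous_pucciFlux.comp (by fun_prop)) x)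
          ((((hJint.const_mul b).sub (hJexp.const_mul a)).const_mul e).comp_sub_left x) hpoint
    _ = e * ∫ z, (b * J z - a * (J z * Real.exp (φ z))) ∂μ := by
        rw [integral_const_mul, integral_sub_left_eq_self
          (fun z => b * J z - a * (J z * Real.exp (φ z))) μ x]
    _ = e * (b * ∫ z, J z ∂μ - a * ∫ z, J z * Real.exp (φ z) ∂μ) := by
        rw [integral_sub (hJint.const_mul b) (hJexp.const_mul a), integral_const_mul,
          integral_const_mul]

lemma exists_isDecayBarrier [Nontrivial E] (hJ : Continuous J) (hJs : HasCompactSupport J)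
    (hJ0 : ∀ z, 0 ≤ J z) (hJne : J ≠ 0) (ha : 0 < a) (hab : a ≤ b) {Ω : Set E}
    (hΩ : Bornology.IsBounded Ω) :
    ∃ c p, 0 < c ∧ IsDecayBarrier μ J a b Ω c p := by
  obtain ⟨φ, hφ⟩ := exists_dual_le_integral_mul_exp (μ := μ) hJ hJs hJ0 hJne
    ((b * ∫ z, J z ∂μ + 1) / a)
  rw [div_le_iff₀' ha] at hφ
  obtain ⟨R, hR⟩ := (φ.lipschitz.isBounded_image
    (hΩ.closure.union (hΩ.sub hJs.isCompact.isBounded))).exists_norm_le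
  have hφR (y : E) (hy : y ∈ closure Ω ∪ (Ω - tsupport J)) : -R ≤ φ y ∧ φ y ≤ R :=
    abs_le.1 (hR _ (mem_image_of_mem φ hy))
  set B := 1 + Real.exp R
  have hB : 0 < B := by positivity
  refine ⟨Real.exp (-R) / B, fun y => B - Real.exp (-φ y), by positivity, by fun_prop, ?_, ?_⟩
  · intro y hy
    have : Real.exp (-φ y) ≤ Real.exp R := Real.exp_le_exp.2 (neg_le.1 (hφR y hy).1)
    linarith
  · intro x hx
    have hφx : Real.exp (-R) ≤ Real.exp (-φ x) :=
      Real.exp_le_exp.2 (neg_le_neg (hφR x (Or.inl (subset_closure hx))).2)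
    calc nonlocalFlux μ J (pucciFlux a b) (fun y => B - Real.exp (-φ y)) x
        ≤ Real.exp (-φ x) * (b * ∫ z, J z ∂μ - a * ∫ z, J z * Real.exp (φ z) ∂μ) :=
          nonlocalFlux_const_sub_exp_le hJ hJs hJ0 hab φ B x
      _ ≤ Real.exp (-φ x) * -1 := by gcongr; linarith
      _ ≤ -(Real.exp (-R) / B) * B := by rw [neg_mul, div_mul_cancel₀ _ hB.ne']; linarith
      _ ≤ -(Real.exp (-R) / B) * (B - Real.exp (-φ x)) := by
          have := mul_pos (div_pos (Real.exp_pos (-R)) hB) (Real.exp_pos (-φ x))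
          linarith

end Barrier

section Comparison

variable {E : Type*} [NormedAddCommGroup E] [MeasurableSpace E] [BorelSpace E] {μ : Measure E}
  {J : E → ℝ} {g : E → ℝ → ℝ} {Ω : Set E} {u : E → ℝ → ℝ} {a b : ℝ}

lemma IsDirichletSolution.setIntegral_eq_nonlocalFlux (hu : IsDirichletSolution μ J g Ω u)
    (hΩ : IsOpen Ω) {x : E} (hx : x ∈ Ω) {t : ℝ} (ht : 0 < t) :
    ∫ y in Ω - tsupport J, J (x - y) * g x (u y t - u x t) ∂μ =
      nonlocalFlux μ J (g x) (zeroExt (closure Ω) u t) x := by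
  rw [nonlocalFlux, zeroExt_of_mem (subset_closure hx),
    ← setIntegral_eq_integral_of_forall_compl_eq_zero (s := Ω - tsupport J)
      (f := fun y => J (x - y) * g x (zeroExt (closure Ω) u t y - u x t))]
  · refine setIntegral_congr_fun hΩ.sub_right.measurableSet fun y hy => ?_
    by_cases hyΩ : y ∈ closure Ω
    · simp only [zeroExt_of_mem hyΩ]
    · simp only [zeroExt, indicator_of_notMem hyΩ, hu.eq_zero y ⟨hy, hyΩ⟩ t ht]
  · intro y hy
    rw [by_contra fun hne => hy (mem_sub_tsupport hx hne), zero_mul]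

lemma IsDirichletSolution.hasDerivAt (hu : IsDirichletSolution μ J g Ω u) (hΩ : IsOpen Ω)
    (hK : IsCompact (closure Ω)) {x : E} (hx : x ∈ Ω) (hJ : Integrable (fun y => J (x - y)) μ)
    (hg : Continuous (g x)) {t : ℝ} (ht : 0 < t) :
    HasDerivAt (u x) (nonlocalFlux μ J (g x) (zeroExt (closure Ω) u t) x) t := by
  set I := fun t => nonlocalFlux μ J (g x) (zeroExt (closure Ω) u t) x
  have hI : ContinuousOn I (Ici 0) :=
    continuousOn_nonlocalFlux_zeroExt hK hu.continuousOn hg hJ (subset_closure hx)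
  have heq : u x =ᶠ[𝓝 t] fun s => u x 0 + ∫ τ in (0 : ℝ)..s, I τ := by
    filter_upwards [Ioi_mem_nhds ht] with s hs
    rw [hu.eq_integral x (subset_closure hx) s hs]
    congr 1
    refine intervalIntegral.integral_congr_ae (Eventually.of_forall fun τ hτ => ?_)
    rw [uIoc_of_le (mem_Ioi.1 hs).le] at hτ
    exact hu.setIntegral_eq_nonlocalFlux hΩ hx hτ.1
  refine HasDerivAt.congr_of_eventuallyEq (HasDerivAt.const_add _ ?_) heq
  exact intervalIntegral.integral_hasDerivAt_right
    ((hI.mono Icc_subset_Ici_self).intervalIntegrable_of_Icc ht.le)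
    ((hI.mono Ioi_subset_Ici_self).stronglyMeasurableAtFilter isOpen_Ioi t ht)
    (hI.continuousAt (Ici_mem_nhds ht))

variable [NormedSpace ℝ E] [FiniteDimensional ℝ E] [μ.IsAddHaarMeasure]

lemma IsDecayBarrier.nonlocalFlux_le {c k : ℝ} {p f : E → ℝ} {ψ : ℝ → ℝ} {x : E}
    (hp : IsDecayBarrier μ J a b Ω c p) (hJ : Continuous J) (hJs : HasCompactSupport J)
    (hJ0 : ∀ z, 0 ≤ J z) (ha : 0 ≤ a) (hab : a ≤ b) (hψ : ∀ s, ψ s ≤ pucciFlux a b s)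
    (hfint : Integrable (fun y => J (x - y) * ψ (f y - f x)) μ) (hx : x ∈ Ω) (hk : 0 ≤ k)
    (hf : ∀ y ∈ closure Ω ∪ (Ω - tsupport J), f y ≤ k * p y) :
    nonlocalFlux μ J ψ f x ≤ -c * (k * p x) + b * (∫ z, J z ∂μ) * (k * p x - f x) := by
  have hpc := hp.continuous
  have hscale : nonlocalFlux μ J (pucciFlux a b) (fun y => k * p y) x =
      k * nonlocalFlux μ J (pucciFlux a b) p x := by
    simp only [nonlocalFlux, ← mul_sub, pucciFlux_mul hk, mul_left_comm _ k, integral_const_mul]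
  calc nonlocalFlux μ J ψ f x
      ≤ nonlocalFlux μ J (pucciFlux a b) (fun y => k * p y) x +
          b * (∫ y, J (x - y) ∂μ) * (k * p x - f x) :=
        nonlocalFlux_le_pucciFlux_add ha hab hJ0
          ((hJ.integrable_of_hasCompactSupport hJs).comp_sub_left x) hψ hfint
          (integrable_kernel_mul hJ hJs (continuous_pucciFlux.comp (by fun_prop)) x)
          (fun y hy => hf y (Or.inr (mem_sub_tsupport hx hy))) (hf x (Or.inl (subset_closure hx)))
    _ ≤ -c * (k * p x) + b * (∫ z, J z ∂μ) * (k * p x - f x) := by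
        rw [hscale, integral_sub_left_eq_self J μ x]
        linarith [mul_le_mul_of_nonneg_left (hp.flux_le x hx) hk]

lemma IsDirichletSolution.exp_mul_le_sub (hu : IsDirichletSolution μ J g Ω u) (hΩ : IsOpen Ω)
    (hK : IsCompact (closure Ω)) (hJ : Continuous J) (hJs : HasCompactSupport J)
    (hJ0 : ∀ z, 0 ≤ J z) (ha : 0 ≤ a) (hab : a ≤ b) {c : ℝ} {p : E → ℝ}
    (hp : IsDecayBarrier μ J a b Ω c p) {S T : ℝ} (hS : 0 ≤ S)
    (hle : ∀ y ∈ closure Ω, ∀ t ∈ Icc 0 T, u y t ≤ S * Real.exp (-c * t) * p y) {x : E}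
    (hx : x ∈ Ω) (hg : IsEllipticFlux a b (g x)) {t : ℝ} (ht : t ∈ Icc 0 T) :
    Real.exp (-(b * ∫ z, J z ∂μ) * t) * (S * p x - u x 0) ≤
      S * Real.exp (-c * t) * p x - u x t := by
  have hxK : x ∈ closure Ω := subset_closure hx
  have hJint : Integrable (fun y => J (x - y)) μ :=
    (hJ.integrable_of_hasCompactSupport hJs).comp_sub_left x
  have hv (r : ℝ) : HasDerivAt (fun r => S * Real.exp (-c * r) * p x)
      (-c * (S * Real.exp (-c * r) * p x)) r :=
    (((hasDerivAt_exp_mul (-c) r).const_mul S).mul_const (p x)).congr_deriv (by ring)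
  have hext (r : ℝ) (hr : r ∈ Icc 0 T) (y : E) (hy : y ∈ closure Ω ∪ (Ω - tsupport J)) :
      zeroExt (closure Ω) u r y ≤ S * Real.exp (-c * r) * p y := by
    by_cases hyK : y ∈ closure Ω
    · simpa only [zeroExt_of_mem hyK] using hle y hyK r hr
    · have := zero_le_one.trans (hp.one_le y hy)
      rw [zeroExt, indicator_of_notMem hyK]
      positivity
  have hgrow := exp_neg_mul_mul_le_of_hasDerivAt (β := b * ∫ z, J z ∂μ) (T := T)
    (w := fun r => S * Real.exp (-c * r) * p x - u x r)
    (ContinuousOn.sub (by fun_prop)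
      ((hu.continuousOn.uncurry_left x hxK).mono Icc_subset_Ici_self))
    (fun r hr => (hv r).sub (hu.hasDerivAt hΩ hK hx hJint hg.continuous hr.1))
    (fun r hr => by
      have hflux := hp.nonlocalFlux_le hJ hJs hJ0 ha hab hg.le_pucciFlux
        (integrable_flux_zeroExt hK hu.continuousOn hg.continuous hJint hxK hr.1.le) hx
        (by positivity) (hext r (Ioo_subset_Icc_self hr))
      rw [zeroExt_of_mem hxK] at hflux
      linarith) ht
  simpa using hgrow

lemma IsDirichletSolution.exp_mul_sub_le_sub (hu : IsDirichletSolution μ J g Ω u) (hΩ : IsOpen Ω)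
    (hK : IsCompact (closure Ω)) (hJ : Continuous J) (hJs : HasCompactSupport J)
    (hJ0 : ∀ z, 0 ≤ J z) (ha : 0 ≤ a) (hab : a ≤ b)
    (hg : ∀ᵐ x ∂μ.restrict Ω, IsEllipticFlux a b (g x)) {c : ℝ} {p : E → ℝ}
    (hp : IsDecayBarrier μ J a b Ω c p) {A S T : ℝ} (hA : ∀ x ∈ closure Ω, u x 0 ≤ A) (hS : 0 ≤ S)
    (hle : ∀ y ∈ closure Ω, ∀ t ∈ Icc 0 T, u y t ≤ S * Real.exp (-c * t) * p y) {x : E}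
    (hx : x ∈ closure Ω) {t : ℝ} (ht : t ∈ Icc 0 T) :
    Real.exp (-(b * ∫ z, J z ∂μ) * t) * (S - A) ≤ S * Real.exp (-c * t) * p x - u x t := by
  have hpc := hp.continuous
  have hsub : closure {y | y ∈ Ω ∧ IsEllipticFlux a b (g y)} ⊆ closure Ω :=
    closure_mono fun y hy => hy.1
  refine le_on_closure (s := {y | y ∈ Ω ∧ IsEllipticFlux a b (g y)})
    (g := fun y => S * Real.exp (-c * t) * p y - u y t) (fun y hy => ?_) continuousOn_const
    (ContinuousOn.sub (by fun_prop) ((hu.continuousOn.uncurry_right t ht.1).mono hsub))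
    (closure_subset_closure_setOf_of_ae hΩ hg hx)
  have hyK : y ∈ closure Ω := subset_closure hy.1
  refine le_trans ?_ (hu.exp_mul_le_sub hΩ hK hJ hJs hJ0 ha hab hp hS hle hy.1 hy.2 ht)
  have := mul_le_mul_of_nonneg_left (hp.one_le y (Or.inl hyK)) hS
  gcongr ?_ * ?_
  linarith [hA y hyK]

lemma IsDirichletSolution.le_mul_exp_mul (hu : IsDirichletSolution μ J g Ω u) (hΩ : IsOpen Ω)
    (hK : IsCompact (closure Ω)) (hJ : Continuous J) (hJs : HasCompactSupport J)
    (hJ0 : ∀ z, 0 ≤ J z) (ha : 0 ≤ a) (hab : a ≤ b)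
    (hg : ∀ᵐ x ∂μ.restrict Ω, IsEllipticFlux a b (g x)) {c : ℝ} {p : E → ℝ}
    (hp : IsDecayBarrier μ J a b Ω c p) {A : ℝ} (hA0 : 0 ≤ A) (hA : ∀ x ∈ closure Ω, u x 0 ≤ A)
    {x : E} (hx : x ∈ closure Ω) {t : ℝ} (ht : 0 ≤ t) :
    u x t ≤ A * Real.exp (-c * t) * p x := by
  have hpos (y : E) (hy : y ∈ closure Ω) (r : ℝ) : 0 < Real.exp (-c * r) * p y :=
    mul_pos (Real.exp_pos _) (zero_lt_one.trans_le (hp.one_le y (Or.inl hy)))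
  have hcont : ContinuousOn (fun q : E × ℝ => u q.1 q.2 / (Real.exp (-c * q.2) * p q.1))
      (closure Ω ×ˢ Icc 0 t) := by
    have hpc := hp.continuous
    exact (hu.continuousOn.mono (prod_mono_right Icc_subset_Ici_self)).div (by fun_prop)
      fun q hq => (hpos q.1 hq.1 q.2).ne'
  obtain ⟨⟨ym, tm⟩, ⟨hym, htm⟩, hmax⟩ :=
    (hK.prod isCompact_Icc).exists_isMaxOn ⟨(x, t), hx, ht, le_rfl⟩ hcont
  set S := u ym tm / (Real.exp (-c * tm) * p ym)
  have hle (y : E) (hy : y ∈ closure Ω) (r : ℝ) (hr : r ∈ Icc 0 t) :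
      u y r ≤ S * Real.exp (-c * r) * p y := by
    rw [mul_assoc]
    exact (div_le_iff₀ (hpos y hy r)).1 (hmax (a := (y, r)) ⟨hy, hr⟩)
  have htouch : u ym tm = S * Real.exp (-c * tm) * p ym := by
    rw [mul_assoc, div_mul_cancel₀ _ (hpos ym hym tm).ne']
  have hSA : S ≤ A := by
    by_contra! hlt
    have hgap := hu.exp_mul_sub_le_sub hΩ hK hJ hJs hJ0 ha hab hg hp hA (hA0.trans hlt.le) hle
      hym htm
    rw [← htouch, sub_self] at hgap
    exact hgap.not_gt (mul_pos (Real.exp_pos _) (sub_pos.2 hlt))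
  calc u x t ≤ S * Real.exp (-c * t) * p x := hle x hx t ⟨ht, le_rfl⟩
    _ ≤ A * Real.exp (-c * t) * p x := by
      rw [mul_assoc, mul_assoc]
      exact mul_le_mul_of_nonneg_right hSA (hpos x hx t).le

end Comparison

section Hypotheses

variable {N : ℕ} {J : (Fin N → ℝ) → ℝ} {G : (Fin N → ℝ) → ℝ → ℝ}

lemma HypJ.even (hJ : HypJ N J) (z : Fin N → ℝ) : J (-z) = J z :=
  hJ.2.1 _ _ (by simp)

lemma HypJ.ne_zero (hJ : HypJ N J) : J ≠ 0 := by
  rintro rfl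
  simpa using hJ.2.2.2.2.1

lemma HypG.exists_isEllipticFlux (hG : HypG N G) :
    ∃ a b : ℝ, 0 < a ∧ a ≤ b ∧ ∀ᵐ x : Fin N → ℝ, IsEllipticFlux a b fun s => G x s * s := by
  obtain ⟨-, hcont, a, b, ha, hab, hmono⟩ := hG
  refine ⟨a, b, ha, hab, ?_⟩
  filter_upwards [hcont, hmono] with x hcx hx
  refine ⟨hcx.mul continuous_id, fun s => ?_⟩
  rcases lt_trichotomy s 0 with hs | rfl | hs
  · exact Set.mem_uIcc_of_ge (by linarith [(hx 0 s hs).2]) (by linarith [(hx 0 s hs).1])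
  · simp
  · exact Set.mem_uIcc_of_le (by linarith [(hx s 0 hs).1]) (by linarith [(hx s 0 hs).2])

lemma RegularSolutionHom.isDirichletSolution {Ω : Set (Fin N → ℝ)} {u₀ : (Fin N → ℝ) → ℝ}
    {u : (Fin N → ℝ) → ℝ → ℝ} (hJ : ∀ z, J (-z) = J z) (hu : RegularSolutionHom N J G Ω u₀ u) :
    IsDirichletSolution volume J (fun x s => G x s * s) Ω u := by
  obtain ⟨hcont, heq, hzero, hinit⟩ := hu
  have hΩJ : Ω - tsupport J = Ω + tsupport J := by rw [sub_eq_add_neg, tsupport_neg_of_even hJ]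
  have hu₀ (x) (hx : x ∈ closure Ω) : u x 0 = u₀ x :=
    tendsto_nhds_unique (((hcont.uncurry_left x hx) 0 self_mem_Ici).mono_left
      (nhdsWithin_mono _ Ioi_subset_Ici_self)) (hinit.tendsto_at hx)
  refine ⟨hcont, fun x hx t ht => ?_, by rwa [hΩJ]⟩
  rw [heq x hx t ht, hu₀ x hx, add_comm, intervalIntegral.integral_of_le ht.le, hΩJ]
  simp only [mul_comm (G x _), mul_assoc]

end Hypotheses

theorem decay_nonnegative_initial_datum_general {E : Type*} [NormedAddCommGroup E]
    [NormedSpace ℝ E] [FiniteDimensional ℝ E] [Nontrivial E] [MeasurableSpace E] [BorelSpace E]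
    {μ : Measure E} [μ.IsAddHaarMeasure] {Ω : Set E} (hΩ : IsOpen Ω)
    (hΩb : Bornology.IsBounded Ω) {J : E → ℝ} (hJ : Continuous J) (hJs : HasCompactSupport J)
    (hJ0 : ∀ z, 0 ≤ J z) (hJne : J ≠ 0) {g : E → ℝ → ℝ} {a b : ℝ} (ha : 0 < a) (hab : a ≤ b)
    (hg : ∀ᵐ x ∂μ.restrict Ω, IsEllipticFlux a b (g x)) {u : E → ℝ → ℝ}
    (hu : IsDirichletSolution μ J g Ω u) :
    ∃ C c, 0 < c ∧ ∀ x ∈ closure Ω, ∀ t, 0 ≤ t → |u x t| ≤ C * Real.exp (-c * t) := by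
  have hK : IsCompact (closure Ω) := hΩb.isCompact_closure
  obtain ⟨c, p, hc, hp⟩ := exists_isDecayBarrier (μ := μ) hJ hJs hJ0 hJne ha hab hΩb
  obtain ⟨A, hA⟩ := hK.exists_bound_of_continuousOn (hu.continuousOn.uncurry_right 0 self_mem_Ici)
  obtain ⟨M, hM⟩ := hK.exists_bound_of_continuousOn hp.continuous.continuousOn
  refine ⟨A * M, c, hc, fun x hx t ht => ?_⟩
  have hA0 : 0 ≤ A := (norm_nonneg _).trans (hA x hx)
  have hupper := hu.le_mul_exp_mul hΩ hK hJ hJs hJ0 ha.le hab hg hp hA0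
    (fun y hy => (le_abs_self _).trans (hA y hy)) hx ht
  have hlower := hu.neg.le_mul_exp_mul hΩ hK hJ hJs hJ0 ha.le hab
    (hg.mono fun y hy => hy.neg_comp_neg) hp hA0
    (fun y hy => (neg_le_abs _).trans (hA y hy)) hx ht
  calc |u x t| ≤ A * Real.exp (-c * t) * p x := abs_le'.2 ⟨hupper, hlower⟩
    _ ≤ A * Real.exp (-c * t) * M := by gcongr; exact (le_abs_self _).trans (hM x hx)
    _ = A * M * Real.exp (-c * t) := mul_right_comm _ _ _

/-- **Uniform decay to zero of the regular solution with nonnegative continuous initial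
datum** of the homogeneous nonlocal Dirichlet problem. -/
theorem decay_nonnegative_initial_datum
    (N : ℕ) (hN : 1 ≤ N) (Ω : Set (Fin N → ℝ)) (hΩopen : IsOpen Ω)
    (hΩbdd : Bornology.IsBounded Ω)
    (J : (Fin N → ℝ) → ℝ) (hJ : HypJ N J)
    (G : (Fin N → ℝ) → ℝ → ℝ) (hG : HypG N G)
    (u₀ : (Fin N → ℝ) → ℝ) (hu₀c : ContinuousOn u₀ (closure Ω))
    (hu₀pos : ∀ x ∈ closure Ω, 0 ≤ u₀ x)
    (u : (Fin N → ℝ) → ℝ → ℝ) (hu : RegularSolutionHom N J G Ω u₀ u) :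
    TendstoUniformlyOn (fun t x => u x t) (fun _ => (0 : ℝ)) atTop (closure Ω) := by
  have : Nonempty (Fin N) := Fin.pos_iff_nonempty.1 hN
  obtain ⟨a, b, ha, hab, hg⟩ := hG.exists_isEllipticFlux
  obtain ⟨C, c, hc, hdecay⟩ := decay_nonnegative_initial_datum_general hΩopen hΩbdd hJ.2.2.1
    hJ.2.2.2.1 hJ.1 hJ.ne_zero ha hab (ae_restrict_of_ae hg) (hu.isDirichletSolution hJ.even)
  exact tendstoUniformlyOn_zero_of_abs_le_exp hc hdecay
end
end

section
/- Assume J satisfies hypothesis (J), G satisfies hypothesis (G), and let u be a solution of the Cauchy problem (C) with initial datum u₀ ∈ C(ℝ^N) ∩ L^∞(ℝ^N) ∩ L¹(ℝ^N), u₀ ≥ 0. Then: (i) if there exists β > 0 such that G(x,s)s ≤ βs for all s ∈ ℝ and a.e. x ∈ ℝ^N, then the map t ↦ ‖u(·,t)‖_{L¹(ℝ^N)} is nonincreasing on [0,∞), and in particular ‖u(·,t)‖_{L¹(ℝ^N)} ≤ ‖u₀‖_{L¹(ℝ^N)} for all t ≥ 0; (ii) if there exists β > 0 such that G(x,s)s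 ≥ βs for all s ∈ ℝ and a.e. x ∈ ℝ^N, then t ↦ ‖u(·,t)‖_{L¹(ℝ^N)} is nondecreasing on [0,∞), and in particular ‖u(·,t)‖_{L¹(ℝ^N)} ≥ ‖u₀‖_{L¹(ℝ^N)} for all t ≥ 0. -/
open MeasureTheory Set Filter Topology Pointwise

noncomputable section

/-- A global-in-time solution of the nonlocal Cauchy problem (C): a continuous curve in
`C(ℝ^N)` satisfying the integral equation everywhere. -/
def CauchySolutionI (N : ℕ) (J : (Fin N → ℝ) → ℝ) (G : (Fin N → ℝ) → ℝ → ℝ)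
    (u₀ : (Fin N → ℝ) → ℝ) (u : (Fin N → ℝ) → ℝ → ℝ) : Prop :=
  (∀ t ∈ Ici (0 : ℝ), Continuous fun x => u x t) ∧
  (∀ t₀ ∈ Ici (0 : ℝ),
    TendstoUniformly (fun t x => u x t) (fun x => u x t₀) (𝓝[Ici (0 : ℝ)] t₀)) ∧
  (∀ x, u x 0 = u₀ x) ∧
  ∀ x, ∀ t ∈ Ioi (0 : ℝ),
    u x t = (∫ τ in Ioc (0 : ℝ) t, ∫ y : Fin N → ℝ,
      J (x - y) * (u y τ - u x τ) * G x (u y τ - u x τ)) + u₀ x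

/-!
If the flux satisfies `G(x, s) s ≤ β s`, then `∂ₜ u ≤ β K u` with the linear operator
`K u = J * u - (∫ J) u`. Formally `∫ K u = 0` by translation invariance, so `∫ u` decreases. Since
`u` is not known to be integrable at positive times, the equation is tested with weights
`ρ(x) = (1 + ‖x‖ / R) ^ (-(N + 1))`: these change by a factor at most `1 + κ` over the range of the
kernel, so `|∫ ρ K u| ≤ κ (∫ J) ∫ ρ u`, where `κ → 0` as `R → ∞`. An integrating factor turns this
into `∫ ρ u(t) ≤ exp(|β| κ (∫ J) (t - s)) ∫ ρ u(s)`; monotone convergence removes the weight. The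
sign of `β` is irrelevant here, so the reaction case is the same estimate run backwards in time.

The argument needs `u ≥ 0`. Where `u ≥ m` with `m ≤ 0`, the flux cannot push `u` down faster than
the rate `α (∫ J) (u - m)`; hence `u ≥ m (1 - exp(-α (∫ J) T))` on `[0, T]`, which contradicts the
choice of `m = inf u` unless `m ≥ 0`.
-/

section Scalar

lemma exp_mul_sub_le_integral {y y' φ : ℝ → ℝ} {a b : ℝ} (k : ℝ) (hab : a ≤ b)
    (hy : ContinuousOn y (Icc a b)) (hy' : ∀ τ ∈ Ioo a b, HasDerivAt y (y' τ) τ)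
    (hφ : ContinuousOn φ (Icc a b)) (hle : ∀ τ ∈ Ioo a b, y' τ ≤ φ τ) :
    Real.exp (-k * b) * y b - Real.exp (-k * a) * y a ≤
      ∫ τ in a..b, Real.exp (-k * τ) * (φ τ - k * y τ) := by
  have hexp : Continuous fun τ : ℝ => Real.exp (-k * τ) := by fun_prop
  have hderiv : ∀ τ ∈ Ioo a b, HasDerivAt (fun τ => Real.exp (-k * τ) * y τ)
      (Real.exp (-k * τ) * (y' τ - k * y τ)) τ := by
    intro τ hτ
    have h : HasDerivAt (fun τ => Real.exp (-k * τ)) (Real.exp (-k * τ) * -k) τ := by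
      simpa using ((hasDerivAt_id τ).const_mul (-k)).exp
    exact (h.mul (hy' τ hτ)).congr_deriv (by ring)
  refine intervalIntegral.sub_le_integral_of_hasDeriv_right_of_le hab (hexp.continuousOn.mul hy)
    (fun τ hτ => (hderiv τ hτ).hasDerivWithinAt)
    (hexp.continuousOn.mul (hφ.sub (hy.const_mul k))).integrableOn_Icc fun τ hτ => ?_
  gcongr
  exact hle τ hτ

lemma exp_mul_sub_le_of_deriv_ge {y y' : ℝ → ℝ} {a b m k : ℝ} (hab : a ≤ b)
    (hy : ContinuousOn y (Icc a b)) (hy' : ∀ τ ∈ Ioo a b, HasDerivAt y (y' τ) τ)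
    (hge : ∀ τ ∈ Ioo a b, -(k * (y τ - m)) ≤ y' τ) :
    Real.exp (-(k * (b - a))) * (y a - m) ≤ y b - m := by
  have hm : ContinuousOn (fun τ => m - y τ) (Icc a b) := continuousOn_const.sub hy
  have h := exp_mul_sub_le_integral (φ := fun τ => -k * (m - y τ)) (-k) hab hm
    (fun τ hτ => (hy' τ hτ).const_sub m) (hm.const_mul (-k))
    fun τ hτ => by linarith [hge τ hτ]
  simp only [neg_neg, sub_self, mul_zero, intervalIntegral.integral_zero] at h
  have hsplit : Real.exp (-(k * (b - a))) = Real.exp (-(k * b)) * Real.exp (k * a) := by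
    rw [← Real.exp_add]; ring_nf
  have hinv : Real.exp (-(k * b)) * Real.exp (k * b) = 1 := by
    rw [← Real.exp_add, neg_add_cancel, Real.exp_zero]
  calc Real.exp (-(k * (b - a))) * (y a - m)
      = Real.exp (-(k * b)) * (Real.exp (k * a) * (y a - m)) := by rw [hsplit, mul_assoc]
    _ ≤ Real.exp (-(k * b)) * (Real.exp (k * b) * (y b - m)) :=
        mul_le_mul_of_nonneg_left (by linarith) (Real.exp_nonneg _)
    _ = y b - m := by rw [← mul_assoc, hinv, one_mul]

end Scalar

section UniformFamilies

variable {X E : Type*} [TopologicalSpace X]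

lemma continuous_uncurry_of_tendstoUniformly [TopologicalSpace E] {V : X → E → ℝ}
    (hc : ∀ s, Continuous (V s)) (hV : ∀ s, TendstoUniformly V (V s) (𝓝 s)) :
    Continuous (Function.uncurry V) := by
  refine continuous_iff_continuousAt.2 fun ⟨s, x⟩ => ?_
  have hV' : TendstoUniformly (fun p : X × E => V p.1) (V s) (𝓝 (s, x)) :=
    fun W hW => (continuous_fst.tendsto (s, x)).eventually (hV s W hW)
  exact hV'.tendsto_comp (hc s).continuousAt continuousAt_snd

lemma exists_forall_abs_le_of_tendstoUniformly [CompactSpace X] [PreconnectedSpace X]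
    {V : X → E → ℝ} (hV : ∀ s, TendstoUniformly V (V s) (𝓝 s)) {s₀ : X}
    (hs₀ : ∃ M, ∀ x, |V s₀ x| ≤ M) : ∃ M, ∀ s x, |V s x| ≤ M := by
  have hclose : ∀ s, ∀ᶠ t in 𝓝 s, ∀ x, |V s x - V t x| < 1 :=
    fun s => Metric.tendstoUniformly_iff.1 (hV s) 1 one_pos
  have habs : ∀ {a b M : ℝ}, |a - b| < 1 → |b| ≤ M → |a| ≤ M + 1 := fun {a b M} hab hb => by
    linarith [abs_sub_abs_le_abs_sub a b]
  have hbdd : ∀ s, ∃ M, ∀ x, |V s x| ≤ M := by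
    intro s
    refine (isPreconnected_univ.induction₂
      (fun s t => (∃ M, ∀ x, |V s x| ≤ M) ↔ ∃ M, ∀ x, |V t x| ≤ M) (fun s _ => ?_)
      (fun _ _ _ _ _ _ => Iff.trans) (fun _ _ _ _ => Iff.symm) (mem_univ s₀) (mem_univ s)).1 hs₀
    rw [nhdsWithin_univ]
    filter_upwards [hclose s] with t ht
    exact ⟨fun ⟨M, hM⟩ => ⟨M + 1, fun x => habs (abs_sub_comm (V s x) _ ▸ ht x) (hM x)⟩,
      fun ⟨M, hM⟩ => ⟨M + 1, fun x => habs (ht x) (hM x)⟩⟩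
  suffices ∃ M, ∀ s ∈ univ, ∀ x, |V s x| ≤ M by simpa using this
  refine isCompact_univ.induction_on (p := fun S => ∃ M, ∀ s ∈ S, ∀ x, |V s x| ≤ M)
    ⟨0, by simp⟩ (fun S T hST ⟨M, hM⟩ => ⟨M, fun s hs => hM s (hST hs)⟩) ?_ fun s _ => ?_
  · rintro S T ⟨M, hM⟩ ⟨L, hL⟩
    exact ⟨max M L, fun s hs x => hs.elim (fun h => (hM s h x).trans (le_max_left _ _))
      fun h => (hL s h x).trans (le_max_right _ _)⟩
  · obtain ⟨M, hM⟩ := hbdd s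
    rw [nhdsWithin_univ]
    exact ⟨_, hclose s, M + 1, fun t ht x => habs (abs_sub_comm (V s x) _ ▸ ht x) (hM x)⟩

end UniformFamilies

section Measure

variable {X : Type*} [MeasurableSpace X] {μ : Measure X}

lemma forall_le_of_ae_le [TopologicalSpace X] [μ.IsOpenPosMeasure] {f g : X → ℝ} (hf : Continuous f)
    (hg : Continuous g) (h : f ≤ᵐ[μ] g) (x : X) : f x ≤ g x := by
  have hclosed : IsClosed {x | f x ≤ g x} := isClosed_le hf hg
  exact hclosed.closure_subset (Measure.dense_of_ae h x)

variable {f f₀ : X → ℝ}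

lemma integrable_of_lintegral_le (hf : AEStronglyMeasurable f μ) (hf₀ : Integrable f₀ μ)
    (hle : ∫⁻ x, ENNReal.ofReal |f x| ∂μ ≤ ∫⁻ x, ENNReal.ofReal |f₀ x| ∂μ) : Integrable f μ :=
  ⟨hf, (hasFiniteIntegral_iff_norm f).2 (hle.trans_lt ((hasFiniteIntegral_iff_norm f₀).1 hf₀.2))⟩

lemma integral_abs_le_of_lintegral_le (hf : Integrable f μ) (hf₀ : Integrable f₀ μ)
    (hle : ∫⁻ x, ENNReal.ofReal |f x| ∂μ ≤ ∫⁻ x, ENNReal.ofReal |f₀ x| ∂μ) :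
    ∫ x, |f x| ∂μ ≤ ∫ x, |f₀ x| ∂μ := by
  rwa [← ofReal_integral_eq_lintegral_ofReal hf.abs (ae_of_all _ fun _ => abs_nonneg _),
    ← ofReal_integral_eq_lintegral_ofReal hf₀.abs (ae_of_all _ fun _ => abs_nonneg _),
    ENNReal.ofReal_le_ofReal_iff (integral_nonneg fun _ => abs_nonneg _)] at hle

end Measure

section NonlocalOp

variable {E : Type*} [NormedAddCommGroup E] [MeasurableSpace E]

/-- The nonlocal diffusion operator `f ↦ ∫ J(z) γ(f(x - z) - f(x)) dz` with kernel `J` and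
flux `γ`; the convolution variable `z = x - y` makes the kernel independent of `x`. The linear
operator `J * f - (∫ J) f` is the case `γ = id`. -/
def nonlocalOp (μ : Measure E) (J : E → ℝ) (γ : ℝ → ℝ) (f : E → ℝ) (x : E) : ℝ :=
  ∫ z, J z * γ (f (x - z) - f x) ∂μ

lemma integral_sub_left_mul_eq_nonlocalOp [BorelSpace E] {μ : Measure E}
    [μ.IsNegInvariant] [μ.IsAddLeftInvariant] (J : E → ℝ) (γ : ℝ → ℝ) (f : E → ℝ) (x : E) :
    ∫ y, J (x - y) * γ (f y - f x) ∂μ = nonlocalOp μ J γ f x := by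
  simpa [nonlocalOp] using
    integral_sub_left_eq_self (fun z => J z * γ (f (x - z) - f x)) μ x

variable {μ : Measure E} {J f : E → ℝ} {M : ℝ}

lemma nonlocalOp_const_mul (c : ℝ) (x : E) :
    nonlocalOp μ J (fun s => c * s) f x = c * nonlocalOp μ J id f x := by
  simp only [nonlocalOp, id, mul_left_comm _ c, integral_const_mul]

lemma exists_forall_abs_comp_sub_le {γ : ℝ → ℝ} (hγ : Continuous γ) (M : ℝ) :
    ∃ C, ∀ s t, |s| ≤ M → |t| ≤ M → |γ (s - t)| ≤ C := by
  obtain ⟨C, hC⟩ := (isCompact_Icc (a := -(M + M)) (b := M + M)).exists_bound_of_continuousOn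
    hγ.continuousOn
  exact ⟨C, fun s t hs ht => hC _ (abs_le.1 ((abs_sub s t).trans (add_le_add hs ht)))⟩

lemma abs_nonlocalOp_id_le (hJ : Integrable J μ) (hM : ∀ x, |f x| ≤ M) (x : E) :
    |nonlocalOp μ J id f x| ≤ (∫ z, |J z| ∂μ) * (M + M) := by
  rw [← integral_mul_const, ← Real.norm_eq_abs]
  refine norm_integral_le_of_norm_le (hJ.abs.mul_const _) (Eventually.of_forall fun z => ?_)
  rw [norm_mul, Real.norm_eq_abs, Real.norm_eq_abs]
  gcongr
  exact (abs_sub _ _).trans (add_le_add (hM _) (hM _))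

variable [BorelSpace E]

lemma integrable_mul_comp_sub (hJ : Integrable J μ) {γ : ℝ → ℝ} (hγ : Continuous γ)
    (hf : Continuous f) (hM : ∀ x, |f x| ≤ M) (x : E) :
    Integrable (fun z => J z * γ (f (x - z) - f x)) μ := by
  obtain ⟨C, hC⟩ := exists_forall_abs_comp_sub_le hγ M
  exact hJ.mul_bdd (by fun_prop : Continuous _).aestronglyMeasurable
    (Eventually.of_forall fun z => hC _ _ (hM _) (hM _))

lemma nonlocalOp_mono (hJ0 : ∀ z, 0 ≤ J z) (hJ : Integrable J μ) {γ₁ γ₂ : ℝ → ℝ}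
    (hγ₁ : Continuous γ₁) (hγ₂ : Continuous γ₂) (hle : ∀ s, γ₁ s ≤ γ₂ s)
    (hf : Continuous f) (hM : ∀ x, |f x| ≤ M) (x : E) :
    nonlocalOp μ J γ₁ f x ≤ nonlocalOp μ J γ₂ f x :=
  integral_mono (integrable_mul_comp_sub hJ hγ₁ hf hM x) (integrable_mul_comp_sub hJ hγ₂ hf hM x)
    fun z => mul_le_mul_of_nonneg_left (hle _) (hJ0 z)

lemma continuous_uncurry_nonlocalOp (hJ : Integrable J μ) {γ : ℝ → ℝ} (hγ : Continuous γ)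
    {X : Type*} [TopologicalSpace X] [FirstCountableTopology X] {U : X → E → ℝ}
    (hU : Continuous (Function.uncurry U)) (hM : ∀ s x, |U s x| ≤ M) :
    Continuous (Function.uncurry fun s => nonlocalOp μ J γ (U s)) := by
  obtain ⟨C, hC⟩ := exists_forall_abs_comp_sub_le hγ M
  have hshift : Continuous fun q : (X × E) × E => γ (U q.1.1 (q.1.2 - q.2) - U q.1.1 q.1.2) :=
    hγ.comp ((hU.comp (by fun_prop : Continuous fun q : (X × E) × E => (q.1.1, q.1.2 - q.2))).sub
      (hU.comp continuous_fst))
  refine continuous_of_dominated (bound := fun z => |J z| * C) (fun p => ?_) (fun p => ?_)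
    (hJ.abs.mul_const C) (Eventually.of_forall fun z => ?_)
  · exact hJ.aestronglyMeasurable.mul
      (hshift.comp (by fun_prop : Continuous fun z => (p, z))).aestronglyMeasurable
  · refine Eventually.of_forall fun z => ?_
    rw [norm_mul, Real.norm_eq_abs, Real.norm_eq_abs]
    gcongr
    exact hC _ _ (hM _ _) (hM _ _)
  · exact continuous_const.mul (hshift.comp (by fun_prop : Continuous fun p : X × E => (p, z)))

end NonlocalOp

section SlowWeight

variable {E : Type*} [NormedAddCommGroup E] [MeasurableSpace E]

/-- A nonnegative integrable weight that grows by a factor of at most `1 + κ` under translations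
of length at most `r`. Testing the equation with such a weight, where `r` bounds the range of the
kernel, gives sense to `∫ u` before `u` is known to be integrable, at the price of an error `κ`. -/
structure IsSlowWeight (μ : Measure E) (r κ : ℝ) (ρ : E → ℝ) : Prop where
  nonneg : ∀ x, 0 ≤ ρ x
  integrable : Integrable ρ μ
  rate_nonneg : 0 ≤ κ
  map_add_le : ∀ x z, ‖z‖ ≤ r → ρ (x + z) ≤ (1 + κ) * ρ x

namespace IsSlowWeight

variable {μ : Measure E} {r κ : ℝ} {ρ : E → ℝ}

lemma abs_map_add_sub_le (hρ : IsSlowWeight μ r κ ρ) {z : E} (hz : ‖z‖ ≤ r) (x : E) :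
    |ρ (x + z) - ρ x| ≤ κ * ρ x := by
  have hback : ρ x ≤ (1 + κ) * ρ (x + z) := by
    simpa using hρ.map_add_le (x + z) (-z) (by rwa [norm_neg])
  have hκ := hρ.rate_nonneg
  have hlower : 0 ≤ (1 + κ) * (ρ (x + z) - (1 - κ) * ρ x) := by
    nlinarith [mul_nonneg (sq_nonneg κ) (hρ.nonneg x)]
  have := nonneg_of_mul_nonneg_right hlower (by linarith)
  exact abs_le.2 ⟨by linarith, by linarith [hρ.map_add_le x z hz]⟩

variable [BorelSpace E] {J : E → ℝ} {M : ℝ}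

lemma integrable_mul (hρ : IsSlowWeight μ r κ ρ) {f : E → ℝ} (hf : Continuous f)
    (hM : ∀ x, |f x| ≤ M) : Integrable (fun x => ρ x * f x) μ :=
  hρ.integrable.mul_bdd hf.aestronglyMeasurable (Eventually.of_forall hM)

lemma exp_mul_integral_mul_le [SecondCountableTopology E] [SFinite μ]
    (hρ : IsSlowWeight μ r κ ρ) {a b k C : ℝ} (hab : a ≤ b) {U Φ : ℝ → E → ℝ}
    (hU : Continuous (Function.uncurry U)) (hM : ∀ t x, |U t x| ≤ M)
    (hΦ : Continuous (Function.uncurry Φ)) (hC : ∀ t x, |Φ t x| ≤ C)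
    (hΦ0 : ∀ t, ∫ x, ρ x * Φ t x ∂μ ≤ 0)
    (hle : ∀ᵐ x ∂μ, Real.exp (-k * b) * U b x - Real.exp (-k * a) * U a x ≤
      ∫ t in a..b, Real.exp (-k * t) * Φ t x) :
    Real.exp (-k * b) * ∫ x, ρ x * U b x ∂μ ≤ Real.exp (-k * a) * ∫ x, ρ x * U a x ∂μ := by
  have hexp : Continuous fun t : ℝ => Real.exp (-k * t) := by fun_prop
  have hint : Integrable (Function.uncurry fun t x => Real.exp (-k * t) * ρ x * Φ t x)
      ((volume.restrict (uIoc a b)).prod μ) :=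
    ((hexp.integrableOn_uIcc.mono_set uIoc_subset_uIcc).integrable.mul_prod hρ.integrable).mul_bdd
      hΦ.aestronglyMeasurable (Eventually.of_forall fun p => hC p.1 p.2)
  have hslice : ∀ t, Integrable (fun x => Real.exp (-k * t) * (ρ x * U t x)) μ := fun t =>
    (hρ.integrable_mul (hU.comp (Continuous.prodMk_right t)) (hM t)).const_mul _
  rw [← sub_nonpos, ← integral_const_mul, ← integral_const_mul,
    ← integral_sub (hslice b) (hslice a)]
  calc ∫ x, (Real.exp (-k * b) * (ρ x * U b x) - Real.exp (-k * a) * (ρ x * U a x)) ∂μ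
      ≤ ∫ x, (∫ t in a..b, Real.exp (-k * t) * ρ x * Φ t x) ∂μ := by
        refine integral_mono_ae ((hslice b).sub (hslice a)) ?_ (hle.mono fun x hx => ?_)
        · simpa only [intervalIntegral.integral_of_le hab, uIoc_of_le hab,
            Function.uncurry_apply_pair] using hint.integral_prod_right
        · simp only [mul_left_comm _ (ρ x), ← mul_sub, mul_comm _ (ρ x), mul_assoc (ρ x),
            intervalIntegral.integral_const_mul]
          exact mul_le_mul_of_nonneg_left hx (hρ.nonneg x)
    _ = ∫ t in a..b, ∫ x, Real.exp (-k * t) * ρ x * Φ t x ∂μ :=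
        (intervalIntegral_integral_swap hint).symm
    _ ≤ 0 := by
        simp only [mul_assoc, integral_const_mul]
        rw [intervalIntegral.integral_of_le hab]
        exact integral_nonpos fun t => mul_nonpos_of_nonneg_of_nonpos (Real.exp_nonneg _) (hΦ0 t)

variable [μ.IsAddRightInvariant]

lemma integral_mul_sub_comp_sub_right (hρ : IsSlowWeight μ r κ ρ) {f : E → ℝ}
    (hf : Continuous f) (hM : ∀ x, |f x| ≤ M) (z : E) :
    ∫ x, ρ x * (f (x - z) - f x) ∂μ = ∫ x, (ρ (x + z) - ρ x) * f x ∂μ := by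
  have hf_shift : Continuous fun x => f (x - z) := by fun_prop
  have hρ_shift : Integrable (fun x => ρ (x + z) * f x) μ :=
    (hρ.integrable.comp_add_right z).mul_bdd hf.aestronglyMeasurable (Eventually.of_forall hM)
  have htranslate : ∫ x, ρ x * f (x - z) ∂μ = ∫ x, ρ (x + z) * f x ∂μ := by
    simpa using integral_sub_right_eq_self (fun x => ρ (x + z) * f x) z
  simp only [mul_sub, sub_mul]
  rw [integral_sub (hρ.integrable_mul hf_shift fun x => hM _) (hρ.integrable_mul hf hM),
    integral_sub hρ_shift (hρ.integrable_mul hf hM), htranslate]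

variable [SecondCountableTopology E] [SFinite μ]

lemma integral_mul_nonlocalOp_id (hρ : IsSlowWeight μ r κ ρ) (hJ : Integrable J μ) {f : E → ℝ}
    (hf : Continuous f) (hM : ∀ x, |f x| ≤ M) :
    ∫ x, ρ x * nonlocalOp μ J id f x ∂μ = ∫ z, J z * ∫ x, (ρ (x + z) - ρ x) * f x ∂μ ∂μ := by
  have hdiff : Continuous fun p : E × E => f (p.1 - p.2) - f p.1 := by fun_prop
  have hprod : Integrable (fun p : E × E => ρ p.1 * J p.2 * (f (p.1 - p.2) - f p.1)) (μ.prod μ) :=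
    (hρ.integrable.mul_prod hJ).mul_bdd hdiff.aestronglyMeasurable
      (Eventually.of_forall fun p => (abs_sub _ _).trans (add_le_add (hM _) (hM _)))
  calc ∫ x, ρ x * nonlocalOp μ J id f x ∂μ
      = ∫ x, ∫ z, ρ x * J z * (f (x - z) - f x) ∂μ ∂μ := by
        simp only [nonlocalOp, id, mul_assoc, integral_const_mul]
    _ = ∫ z, ∫ x, ρ x * J z * (f (x - z) - f x) ∂μ ∂μ := integral_integral_swap hprod
    _ = ∫ z, J z * ∫ x, ρ x * (f (x - z) - f x) ∂μ ∂μ := by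
        simp only [mul_assoc, mul_left_comm _ (J _), integral_const_mul]
    _ = ∫ z, J z * ∫ x, (ρ (x + z) - ρ x) * f x ∂μ ∂μ := by
        simp only [hρ.integral_mul_sub_comp_sub_right hf hM]

lemma abs_integral_mul_nonlocalOp_id_le (hρ : IsSlowWeight μ r κ ρ) (hJ : Integrable J μ)
    (hJr : ∀ z, J z ≠ 0 → ‖z‖ ≤ r) {f : E → ℝ} (hf : Continuous f) (hf0 : ∀ x, 0 ≤ f x)
    (hM : ∀ x, |f x| ≤ M) :
    |∫ x, ρ x * nonlocalOp μ J id f x ∂μ| ≤ (∫ z, |J z| ∂μ) * (κ * ∫ x, ρ x * f x ∂μ) := by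
  rw [hρ.integral_mul_nonlocalOp_id hJ hf hM, ← integral_mul_const, ← Real.norm_eq_abs]
  refine norm_integral_le_of_norm_le (hJ.abs.mul_const _) (Eventually.of_forall fun z => ?_)
  rcases eq_or_ne (J z) 0 with hz | hz
  · simp [hz]
  rw [norm_mul, Real.norm_eq_abs, ← integral_const_mul]
  refine mul_le_mul_of_nonneg_left ?_ (abs_nonneg _)
  refine norm_integral_le_of_norm_le ((hρ.integrable_mul hf hM).const_mul κ)
    (Eventually.of_forall fun x => ?_)
  rw [norm_mul, Real.norm_eq_abs, Real.norm_of_nonneg (hf0 x), ← mul_assoc]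
  exact mul_le_mul_of_nonneg_right (hρ.abs_map_add_sub_le (hJr z hz) x) (hf0 x)

lemma integral_mul_nonlocalOp_sub_nonpos (hρ : IsSlowWeight μ r κ ρ) (hJ : Integrable J μ)
    (hJr : ∀ z, J z ≠ 0 → ‖z‖ ≤ r) {f : E → ℝ} (hf : Continuous f) (hf0 : ∀ x, 0 ≤ f x)
    (hM : ∀ x, |f x| ≤ M) (c : ℝ) :
    ∫ x, ρ x * (c * nonlocalOp μ J id f x - |c| * ((∫ z, |J z| ∂μ) * κ) * f x) ∂μ ≤ 0 := by
  have hK : Continuous (nonlocalOp μ J id f) :=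
    (continuous_uncurry_nonlocalOp (U := fun _ : Unit => f) hJ continuous_id
      (hf.comp continuous_snd) fun _ => hM).comp (Continuous.prodMk_right ())
  have hρK : Integrable (fun x => ρ x * nonlocalOp μ J id f x) μ :=
    hρ.integrable_mul hK (abs_nonlocalOp_id_le hJ hM)
  simp only [mul_sub, mul_left_comm (ρ _)]
  rw [integral_sub (hρK.const_mul c) ((hρ.integrable_mul hf hM).const_mul _), integral_const_mul,
    integral_const_mul, sub_nonpos]
  calc c * ∫ x, ρ x * nonlocalOp μ J id f x ∂μ
      ≤ |c| * |∫ x, ρ x * nonlocalOp μ J id f x ∂μ| := (le_abs_self _).trans_eq (abs_mul _ _)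
    _ ≤ |c| * ((∫ z, |J z| ∂μ) * (κ * ∫ x, ρ x * f x ∂μ)) := by
        gcongr
        exact hρ.abs_integral_mul_nonlocalOp_id_le hJ hJr hf hf0 hM
    _ = |c| * ((∫ z, |J z| ∂μ) * κ) * ∫ x, ρ x * f x ∂μ := by ring

lemma integral_mul_le_exp_mul (hρ : IsSlowWeight μ r κ ρ) (hJ : Integrable J μ)
    (hJr : ∀ z, J z ≠ 0 → ‖z‖ ≤ r) {U U' : ℝ → E → ℝ} (hU : Continuous (Function.uncurry U))
    (hU0 : ∀ t x, 0 ≤ U t x) (hM : ∀ t x, |U t x| ≤ M) {a b c : ℝ} (hab : a ≤ b)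
    (hU' : ∀ᵐ x ∂μ, ∀ t ∈ Ioo a b,
      HasDerivAt (fun t => U t x) (U' t x) t ∧ U' t x ≤ c * nonlocalOp μ J id (U t) x) :
    ∫ x, ρ x * U b x ∂μ ≤
      Real.exp (|c| * ((∫ z, |J z| ∂μ) * κ) * (b - a)) * ∫ x, ρ x * U a x ∂μ := by
  -- The integrating factor `exp (-k t)` absorbs the error term of the weight.
  set k := |c| * ((∫ z, |J z| ∂μ) * κ)
  have hK := continuous_uncurry_nonlocalOp hJ continuous_id hU hM
  have hdecay : Real.exp (-k * b) * ∫ x, ρ x * U b x ∂μ ≤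
      Real.exp (-k * a) * ∫ x, ρ x * U a x ∂μ := by
    refine hρ.exp_mul_integral_mul_le hab hU hM
      (Φ := fun t x => c * nonlocalOp μ J id (U t) x - k * U t x)
      ((hK.const_mul c).sub (hU.const_mul k))
      (C := |c| * ((∫ z, |J z| ∂μ) * (M + M)) + |k| * M) (fun t x => ?_)
      (fun t => hρ.integral_mul_nonlocalOp_sub_nonpos hJ hJr (hU.comp (Continuous.prodMk_right t))
        (hU0 t) (hM t) c) (hU'.mono fun x hx => ?_)
    · refine (abs_sub _ _).trans ?_
      rw [abs_mul, abs_mul]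
      gcongr
      exacts [abs_nonlocalOp_id_le hJ (hM t) x, hM t x]
    · exact exp_mul_sub_le_integral k hab (hU.comp (Continuous.prodMk_left x)).continuousOn
        (fun t ht => (hx t ht).1) ((hK.comp (Continuous.prodMk_left x)).const_mul c).continuousOn
        fun t ht => (hx t ht).2
  have hsplit : Real.exp (k * (b - a)) = Real.exp (k * b) * Real.exp (-k * a) := by
    rw [← Real.exp_add]; ring_nf
  calc ∫ x, ρ x * U b x ∂μ = Real.exp (k * b) * (Real.exp (-k * b) * ∫ x, ρ x * U b x ∂μ) := by
        rw [← mul_assoc, ← Real.exp_add, neg_mul, add_neg_cancel, Real.exp_zero, one_mul]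
    _ ≤ Real.exp (k * b) * (Real.exp (-k * a) * ∫ x, ρ x * U a x ∂μ) := by gcongr
    _ = Real.exp (k * (b - a)) * ∫ x, ρ x * U a x ∂μ := by rw [hsplit, mul_assoc (Real.exp _)]

end IsSlowWeight

end SlowWeight

section PolyWeight

variable {E : Type*} [NormedAddCommGroup E] [NormedSpace ℝ E]

/-- The weight `(1 + ‖x‖ / R) ^ (-(dim E + 1))`: integrable for each `R`, increasing to `1` as
`R → ∞`, and varying ever more slowly. -/
def polyWeight (R : ℝ) (x : E) : ℝ := ((1 + ‖x‖ / R) ^ (Module.finrank ℝ E + 1))⁻¹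

lemma polyWeight_nonneg {R : ℝ} (hR : 0 < R) (x : E) : 0 ≤ polyWeight R x := by
  unfold polyWeight
  positivity

lemma continuous_polyWeight {R : ℝ} (hR : 0 < R) : Continuous (polyWeight (E := E) R) :=
  Continuous.inv₀ (by fun_prop) fun x => by positivity

lemma polyWeight_le_polyWeight {R S : ℝ} (hR : 0 < R) (hRS : R ≤ S) (x : E) :
    polyWeight R x ≤ polyWeight S x := by
  have hS : 0 < S := hR.trans_le hRS
  unfold polyWeight
  gcongr

lemma tendsto_polyWeight (x : E) :
    Tendsto (fun n : ℕ => polyWeight ((n : ℝ) + 1) x) atTop (𝓝 1) := by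
  have hdiv : Tendsto (fun n : ℕ => ‖x‖ / ((n : ℝ) + 1)) atTop (𝓝 0) :=
    tendsto_const_nhds.div_atTop (tendsto_natCast_atTop_atTop.atTop_add tendsto_const_nhds)
  simpa [polyWeight] using ((hdiv.const_add 1).pow (Module.finrank ℝ E + 1)).inv₀ (by simp)

variable [MeasurableSpace E] [BorelSpace E] {μ : Measure E}

lemma tendsto_lintegral_polyWeight_mul {f : E → ℝ} (hf : Continuous f) (hf0 : ∀ x, 0 ≤ f x) :
    Tendsto (fun n : ℕ => ∫⁻ x, ENNReal.ofReal (polyWeight ((n : ℝ) + 1) x * f x) ∂μ) atTop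
      (𝓝 (∫⁻ x, ENNReal.ofReal (f x) ∂μ)) := by
  refine lintegral_tendsto_of_tendsto_of_monotone (fun n => ?_)
    (Eventually.of_forall fun x n m hnm => ?_) (Eventually.of_forall fun x => ?_)
  · exact ((continuous_polyWeight n.cast_add_one_pos).mul hf).measurable.ennreal_ofReal.aemeasurable
  · have hcast : (n : ℝ) + 1 ≤ m + 1 := by gcongr
    exact ENNReal.ofReal_le_ofReal (mul_le_mul_of_nonneg_right
      (polyWeight_le_polyWeight n.cast_add_one_pos hcast x) (hf0 x))
  · simpa using ENNReal.tendsto_ofReal ((tendsto_polyWeight x).mul_const (f x))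

variable [FiniteDimensional ℝ E] [μ.IsAddHaarMeasure]

lemma integrable_polyWeight {R : ℝ} (hR : 0 < R) : Integrable (polyWeight R) μ := by
  have h : Integrable (fun x : E => (1 + ‖x‖) ^ (-((Module.finrank ℝ E + 1 : ℕ) : ℝ))) μ :=
    integrable_one_add_norm (by simp)
  refine (h.comp_smul (inv_ne_zero hR.ne')).congr (Eventually.of_forall fun x => ?_)
  simp only [norm_smul, norm_inv, Real.norm_of_nonneg hR.le]
  rw [Real.rpow_neg (by positivity), Real.rpow_natCast, inv_mul_eq_div, polyWeight]

lemma isSlowWeight_polyWeight {r R : ℝ} (hr : 0 ≤ r) (hR : 0 < R) :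
    IsSlowWeight μ r ((1 + r / R) ^ (Module.finrank ℝ E + 1) - 1) (polyWeight R) where
  nonneg := polyWeight_nonneg hR
  integrable := integrable_polyWeight hR
  rate_nonneg := sub_nonneg.2 (one_le_pow₀ (le_add_of_nonneg_right (by positivity)))
  map_add_le x z hz := by
    have hnorm : ‖x‖ ≤ ‖x + z‖ + r := (norm_le_add_norm_add x z).trans (by gcongr)
    have hbase : 1 + ‖x‖ / R ≤ (1 + r / R) * (1 + ‖x + z‖ / R) := by
      have hdiv : ‖x‖ / R ≤ ‖x + z‖ / R + r / R := by rw [← add_div]; gcongr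
      have hcross : 0 ≤ r / R * (‖x + z‖ / R) := by positivity
      linarith
    rw [add_sub_cancel, polyWeight, polyWeight, ← div_eq_mul_inv, inv_le_comm₀ (by positivity)
      (by positivity), inv_div, div_le_iff₀ (by positivity), ← mul_pow, mul_comm]
    gcongr

lemma tendsto_exp_mul_polyWeight_rate (r k l : ℝ) (d : ℕ) :
    Tendsto (fun n : ℕ => Real.exp (k * ((1 + r / ((n : ℝ) + 1)) ^ d - 1) * l)) atTop (𝓝 1) := by
  have hdiv : Tendsto (fun n : ℕ => r / ((n : ℝ) + 1)) atTop (𝓝 0) :=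
    tendsto_const_nhds.div_atTop (tendsto_natCast_atTop_atTop.atTop_add tendsto_const_nhds)
  have h := ((((hdiv.const_add 1).pow d).sub_const 1).const_mul k).mul_const l
  simpa [Function.comp_def] using (Real.continuous_exp.tendsto _).comp h

lemma lintegral_le_of_deriv_le_mul_nonlocalOp_id {J : E → ℝ} (hJ : Integrable J μ) {r : ℝ}
    (hr : 0 ≤ r) (hJr : ∀ z, J z ≠ 0 → ‖z‖ ≤ r) {U U' : ℝ → E → ℝ}
    (hU : Continuous (Function.uncurry U)) (hU0 : ∀ t x, 0 ≤ U t x) {M : ℝ}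
    (hM : ∀ t x, |U t x| ≤ M) {a b c : ℝ} (hab : a ≤ b)
    (hU' : ∀ᵐ x ∂μ, ∀ t ∈ Ioo a b,
      HasDerivAt (fun t => U t x) (U' t x) t ∧ U' t x ≤ c * nonlocalOp μ J id (U t) x) :
    ∫⁻ x, ENNReal.ofReal (U b x) ∂μ ≤ ∫⁻ x, ENNReal.ofReal (U a x) ∂μ := by
  have hslice : ∀ t, Continuous (U t) := fun t => hU.comp (Continuous.prodMk_right t)
  have hfactor := ENNReal.tendsto_ofReal (tendsto_exp_mul_polyWeight_rate r
    (|c| * ∫ z, |J z| ∂μ) (b - a) (Module.finrank ℝ E + 1))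
  have hlim := ENNReal.Tendsto.mul hfactor (by simp)
    (tendsto_lintegral_polyWeight_mul (μ := μ) (hslice a) (hU0 a)) (by simp)
  rw [ENNReal.ofReal_one, one_mul] at hlim
  refine le_of_tendsto_of_tendsto' (tendsto_lintegral_polyWeight_mul (hslice b) (hU0 b)) hlim
    fun n => ?_
  have hρ := isSlowWeight_polyWeight (μ := μ) hr n.cast_add_one_pos
  have hweighted : ∀ t, ∫⁻ x, ENNReal.ofReal (polyWeight ((n : ℝ) + 1) x * U t x) ∂μ =
      ENNReal.ofReal (∫ x, polyWeight ((n : ℝ) + 1) x * U t x ∂μ) := fun t =>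
    (ofReal_integral_eq_lintegral_ofReal (hρ.integrable_mul (hslice t) (hM t))
      (Eventually.of_forall fun x => mul_nonneg (hρ.nonneg x) (hU0 t x))).symm
  rw [hweighted, hweighted, ← ENNReal.ofReal_mul (Real.exp_nonneg _), mul_assoc |c|]
  exact ENNReal.ofReal_le_ofReal (hρ.integral_mul_le_exp_mul hJ hJr hU hU0 hM hab hU')

end PolyWeight

section Flux

/-- The structural assumption on a flux `s ↦ G(x, s) s` at a fixed point `x`. -/
structure IsFlux (α : NNReal) (γ : ℝ → ℝ) : Prop where
  map_zero : γ 0 = 0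
  monotone : Monotone γ
  lipschitz : LipschitzWith α γ

lemma IsFlux.mul_le_of_nonpos {α : NNReal} {γ : ℝ → ℝ} (hγ : IsFlux α γ) {s : ℝ} (hs : s ≤ 0) :
    α * s ≤ γ s := by
  have h := hγ.lipschitz.norm_sub_le s 0
  rw [hγ.map_zero, sub_zero, sub_zero, Real.norm_eq_abs, Real.norm_of_nonpos hs] at h
  linarith [neg_abs_le (γ s)]

/-- The assumptions on a kernel `J` that the evolution needs. -/
structure IsKernel {E : Type*} [NormedAddCommGroup E] [MeasurableSpace E] (μ : Measure E)
    (J : E → ℝ) : Prop where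
  nonneg : ∀ z, 0 ≤ J z
  integrable : Integrable J μ
  isBounded_support : Bornology.IsBounded (Function.support J)

variable {E : Type*} [NormedAddCommGroup E] [MeasurableSpace E] [BorelSpace E] {μ : Measure E}
  {J f : E → ℝ} {M : ℝ}

lemma neg_mul_sub_le_nonlocalOp (hJ : IsKernel μ J) {α : NNReal} {γ : ℝ → ℝ} (hγ : IsFlux α γ)
    (hf : Continuous f) (hM : ∀ x, |f x| ≤ M) {m : ℝ} (hm : ∀ x, m ≤ f x) (x : E) :
    -((α * ∫ z, J z ∂μ) * (f x - m)) ≤ nonlocalOp μ J γ f x := by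
  have hle : ∀ z, α * (m - f x) ≤ γ (f (x - z) - f x) := fun z =>
    (hγ.mul_le_of_nonpos (by linarith [hm x])).trans
      (hγ.monotone (sub_le_sub_right (hm _) _))
  calc -((α * ∫ z, J z ∂μ) * (f x - m)) = ∫ z, J z * (α * (m - f x)) ∂μ := by
        rw [integral_mul_const]; ring
    _ ≤ nonlocalOp μ J γ f x :=
        integral_mono (hJ.integrable.mul_const _)
          (integrable_mul_comp_sub hJ.integrable hγ.lipschitz.continuous hf hM x)
          fun z => mul_le_mul_of_nonneg_left (hle z) (hJ.nonneg z)

end Flux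

section StrongSolution

variable {E : Type*} [NormedAddCommGroup E] [MeasurableSpace E]

/-- A bounded curve `U` of functions on `E` that solves `∂ₜ U = ∫ J(z) g(x, U(x - z) - U(x)) dz`
classically on `(0, T)`, for almost every `x`. Continuity and boundedness are required for all real
times, so that no restriction to `[0, T]` has to be carried along. -/
structure IsStrongSolution (μ : Measure E) (J : E → ℝ) (g : E → ℝ → ℝ) (T : ℝ) (U : ℝ → E → ℝ) :
    Prop where
  continuous_uncurry : Continuous (Function.uncurry U)
  bounded : ∃ M, ∀ t x, |U t x| ≤ M
  hasDerivAt : ∀ᵐ x ∂μ, ∀ t ∈ Ioo 0 T,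
    HasDerivAt (fun t => U t x) (nonlocalOp μ J (g x) (U t) x) t

namespace IsStrongSolution

variable {μ : Measure E} {J : E → ℝ} {g : E → ℝ → ℝ} {T : ℝ} {U : ℝ → E → ℝ}

lemma continuous_space (hU : IsStrongSolution μ J g T U) (t : ℝ) : Continuous (U t) :=
  hU.continuous_uncurry.comp (Continuous.prodMk_right t)

lemma continuous_time (hU : IsStrongSolution μ J g T U) (x : E) : Continuous fun t => U t x :=
  hU.continuous_uncurry.comp (Continuous.prodMk_left x)

variable [BorelSpace E] {α : NNReal}

lemma lowerBound_improve [μ.IsOpenPosMeasure] (hU : IsStrongSolution μ J g T U)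
    (hJ : IsKernel μ J) (hg : ∀ᵐ x ∂μ, IsFlux α (g x)) (h0 : ∀ x, 0 ≤ U 0 x) {m : ℝ}
    (hm0 : m ≤ 0) (hm : ∀ t ∈ Icc 0 T, ∀ x, m ≤ U t x) {t : ℝ} (ht : t ∈ Icc 0 T) (x : E) :
    m * (1 - Real.exp (-((α * ∫ z, J z ∂μ) * T))) ≤ U t x := by
  obtain ⟨M, hM⟩ := hU.bounded
  refine forall_le_of_ae_le (μ := μ) continuous_const (hU.continuous_space t) ?_ x
  filter_upwards [hU.hasDerivAt, hg] with x hx hgx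
  have hdecay := exp_mul_sub_le_of_deriv_ge (m := m) (k := α * ∫ z, J z ∂μ) ht.1
    (hU.continuous_time x).continuousOn (fun τ hτ => hx τ ⟨hτ.1, hτ.2.trans_le ht.2⟩)
    fun τ hτ => neg_mul_sub_le_nonlocalOp hJ hgx (hU.continuous_space τ) (hM τ)
      (hm τ ⟨hτ.1.le, hτ.2.le.trans ht.2⟩) x
  rw [sub_zero] at hdecay
  have hJ0 : 0 ≤ ∫ z, J z ∂μ := integral_nonneg hJ.nonneg
  calc m * (1 - Real.exp (-((α * ∫ z, J z ∂μ) * T)))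
      = m + Real.exp (-((α * ∫ z, J z ∂μ) * T)) * -m := by ring
    _ ≤ m + Real.exp (-((α * ∫ z, J z ∂μ) * t)) * (U 0 x - m) := by
        gcongr
        exacts [neg_nonneg.2 hm0, ht.2, by linarith [h0 x]]
    _ ≤ U t x := by linarith

lemma nonneg [μ.IsOpenPosMeasure] (hU : IsStrongSolution μ J g T U) (hJ : IsKernel μ J)
    (hg : ∀ᵐ x ∂μ, IsFlux α (g x)) (h0 : ∀ x, 0 ≤ U 0 x) {t : ℝ} (ht : t ∈ Icc 0 T) (x : E) :
    0 ≤ U t x := by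
  obtain ⟨M, hM⟩ := hU.bounded
  have hbdd : BddBelow (range fun p : Icc 0 T × E => U p.1 p.2) :=
    ⟨-M, by rintro _ ⟨p, rfl⟩; exact neg_le_of_abs_le (hM _ _)⟩
  set m := ⨅ p : Icc 0 T × E, U p.1 p.2
  have hm : ∀ t ∈ Icc 0 T, ∀ x, m ≤ U t x := fun t ht x => ciInf_le hbdd (⟨t, ht⟩, x)
  suffices 0 ≤ m from this.trans (hm t ht x)
  by_contra! hneg
  have : Nonempty (Icc 0 T × E) := ⟨⟨t, ht⟩, x⟩
  have himprove : m * (1 - Real.exp (-((α * ∫ z, J z ∂μ) * T))) ≤ m :=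
    le_ciInf fun p => hU.lowerBound_improve hJ hg h0 hneg.le hm p.1.2 p.2
  linarith [mul_neg_of_neg_of_pos hneg (Real.exp_pos (-((α * ∫ z, J z ∂μ) * T)))]

variable [NormedSpace ℝ E] [FiniteDimensional ℝ E] [μ.IsAddHaarMeasure] {β s t : ℝ}

lemma lintegral_le_of_flux_le (hU : IsStrongSolution μ J g T U) (hJ : IsKernel μ J)
    (hg : ∀ᵐ x ∂μ, IsFlux α (g x)) (hU0 : ∀ t x, 0 ≤ U t x) (hβ : ∀ᵐ x ∂μ, ∀ s, g x s ≤ β * s)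
    (hs : 0 ≤ s) (hst : s ≤ t) (htT : t ≤ T) :
    ∫⁻ x, ENNReal.ofReal (U t x) ∂μ ≤ ∫⁻ x, ENNReal.ofReal (U s x) ∂μ := by
  obtain ⟨M, hM⟩ := hU.bounded
  obtain ⟨r, hr, hJr⟩ := hJ.isBounded_support.exists_pos_norm_le
  refine lintegral_le_of_deriv_le_mul_nonlocalOp_id hJ.integrable hr.le hJr
    hU.continuous_uncurry hU0 hM hst
    (c := β) (U' := fun τ x => nonlocalOp μ J (g x) (U τ) x) ?_
  filter_upwards [hU.hasDerivAt, hg, hβ] with x hx hgx hβx τ hτ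
  refine ⟨hx τ ⟨hs.trans_lt hτ.1, hτ.2.trans_le htT⟩, ?_⟩
  rw [← nonlocalOp_const_mul]
  exact nonlocalOp_mono hJ.nonneg hJ.integrable hgx.lipschitz.continuous (by fun_prop) hβx
    (hU.continuous_space τ) (hM τ) x

lemma lintegral_le_of_le_flux (hU : IsStrongSolution μ J g T U) (hJ : IsKernel μ J)
    (hg : ∀ᵐ x ∂μ, IsFlux α (g x)) (hU0 : ∀ t x, 0 ≤ U t x) (hβ : ∀ᵐ x ∂μ, ∀ s, β * s ≤ g x s)
    (hs : 0 ≤ s) (hst : s ≤ t) (htT : t ≤ T) :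
    ∫⁻ x, ENNReal.ofReal (U s x) ∂μ ≤ ∫⁻ x, ENNReal.ofReal (U t x) ∂μ := by
  obtain ⟨M, hM⟩ := hU.bounded
  obtain ⟨r, hr, hJr⟩ := hJ.isBounded_support.exists_pos_norm_le
  -- The time reversal of `U` on `[s, t]` satisfies the upper bound with `c = -β`.
  have hrev := lintegral_le_of_deriv_le_mul_nonlocalOp_id (μ := μ) (c := -β)
    (U := fun τ => U (s + t - τ)) (U' := fun τ x => -nonlocalOp μ J (g x) (U (s + t - τ)) x)
    hJ.integrable hr.le hJr
    (hU.continuous_uncurry.comp (by fun_prop : Continuous fun p : ℝ × E => (s + t - p.1, p.2)))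
    (fun _ => hU0 _) (fun _ => hM _) hst ?_
  · simpa using hrev
  filter_upwards [hU.hasDerivAt, hg, hβ] with x hx hgx hβx τ hτ
  refine ⟨(hx (s + t - τ) ⟨by linarith [hτ.2], by linarith [hτ.1]⟩).comp_const_sub (s + t) τ, ?_⟩
  rw [neg_mul, ← nonlocalOp_const_mul, neg_le_neg_iff]
  exact nonlocalOp_mono hJ.nonneg hJ.integrable (by fun_prop) hgx.lipschitz.continuous hβx
    (hU.continuous_space _) (hM _) x

end IsStrongSolution

end StrongSolution

section NonlocalSolution

variable {E : Type*} [NormedAddCommGroup E] [MeasurableSpace E]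

/-- A solution of the Cauchy problem for a general flux `g(x, s)`, of which `CauchySolutionI` is the
case `g(x, s) = G(x, s) s`, with respect to an arbitrary reference measure. -/
structure IsNonlocalSolution (μ : Measure E) (J : E → ℝ) (g : E → ℝ → ℝ) (u₀ : E → ℝ)
    (u : E → ℝ → ℝ) : Prop where
  continuous : ∀ t ∈ Ici (0 : ℝ), Continuous fun x => u x t
  tendstoUniformly : ∀ t₀ ∈ Ici (0 : ℝ),
    TendstoUniformly (fun t x => u x t) (fun x => u x t₀) (𝓝[Ici (0 : ℝ)] t₀)
  initial : ∀ x, u x 0 = u₀ x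
  integral_eq : ∀ᵐ x ∂μ, ∀ t ∈ Ioi (0 : ℝ),
    u x t = (∫ τ in Ioc (0 : ℝ) t, ∫ y, J (x - y) * g x (u y τ - u x τ) ∂μ) + u₀ x

namespace IsNonlocalSolution

variable {μ : Measure E} {J : E → ℝ} {g : E → ℝ → ℝ} {u₀ : E → ℝ} {u : E → ℝ → ℝ} {T : ℝ}

lemma tendstoUniformly_Icc (hu : IsNonlocalSolution μ J g u₀ u) (s : Icc 0 T) :
    TendstoUniformly (fun (t : Icc 0 T) x => u x t) (fun x => u x s) (𝓝 s) := by
  have hval : Tendsto ((↑) : Icc 0 T → ℝ) (𝓝 s) (𝓝[Ici 0] ↑s) :=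
    tendsto_nhdsWithin_iff.2 ⟨continuous_subtype_val.tendsto s, Eventually.of_forall fun t => t.2.1⟩
  exact fun W hW => hval.eventually (hu.tendstoUniformly s s.2.1 W hW)

section NegInvariant

variable [BorelSpace E] [μ.IsNegInvariant] [μ.IsAddLeftInvariant] {α : NNReal}

lemma isStrongSolution (hu : IsNonlocalSolution μ J g u₀ u) (hJ : IsKernel μ J)
    (hg : ∀ᵐ x ∂μ, IsFlux α (g x)) (hu₀ : ∃ M, ∀ x, |u₀ x| ≤ M) (hT : 0 ≤ T) :
    IsStrongSolution μ J g T (IccExtend hT fun t x => u x t) := by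
  have hcont : Continuous (Function.uncurry (IccExtend hT fun t x => u x t)) :=
    (continuous_uncurry_of_tendstoUniformly (fun t : Icc 0 T => hu.continuous t t.2.1)
      hu.tendstoUniformly_Icc).comp ((continuous_projIcc (h := hT)).prodMap continuous_id)
  have : PreconnectedSpace (Icc 0 T) := Subtype.preconnectedSpace isPreconnected_Icc
  obtain ⟨M, hM⟩ : ∃ M, ∀ (t : Icc 0 T) x, |u x t| ≤ M :=
    exists_forall_abs_le_of_tendstoUniformly hu.tendstoUniformly_Icc
      (s₀ := ⟨0, left_mem_Icc.2 hT⟩) (by simpa only [hu.initial] using hu₀)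
  refine ⟨hcont, ⟨M, fun t => hM (projIcc 0 T hT t)⟩, ?_⟩
  filter_upwards [hu.integral_eq, hg] with x hx hgx t ht
  set U := IccExtend hT fun (t : Icc 0 T) x => u x t
  have hU : ∀ τ ∈ Icc 0 T, ∀ y, U τ y = u y τ := fun τ hτ => congrFun (IccExtend_of_mem hT _ hτ)
  have hφ : Continuous fun τ => nonlocalOp μ J (g x) (U τ) x :=
    (continuous_uncurry_nonlocalOp hJ.integrable hgx.lipschitz.continuous hcont
      fun τ => hM (projIcc 0 T hT τ)).comp (Continuous.prodMk_left x)
  refine ((hφ.integral_hasStrictDerivAt 0 t).hasDerivAt.add_const (u₀ x)).congr_of_eventuallyEq ?_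
  filter_upwards [Ioo_mem_nhds ht.1 ht.2] with τ hτ
  rw [hU τ (Ioo_subset_Icc_self hτ) x, hx τ hτ.1, intervalIntegral.integral_of_le hτ.1.le]
  congr 1
  refine setIntegral_congr_fun measurableSet_Ioc fun σ hσ => ?_
  simp only [← integral_sub_left_mul_eq_nonlocalOp, hU σ ⟨hσ.1.le, hσ.2.trans hτ.2.le⟩]

lemma nonneg [μ.IsOpenPosMeasure] (hu : IsNonlocalSolution μ J g u₀ u) (hJ : IsKernel μ J)
    (hg : ∀ᵐ x ∂μ, IsFlux α (g x)) (hu₀ : ∃ M, ∀ x, |u₀ x| ≤ M) (hu₀0 : ∀ x, 0 ≤ u₀ x) (x : E)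
    {t : ℝ} (ht : 0 ≤ t) : 0 ≤ u x t := by
  have h := (hu.isStrongSolution hJ hg hu₀ ht).nonneg hJ hg
    (fun x => by simpa [hu.initial] using hu₀0 x) (right_mem_Icc.2 ht) x
  rwa [IccExtend_right] at h

lemma exists_isStrongSolution_nonneg [μ.IsOpenPosMeasure] (hu : IsNonlocalSolution μ J g u₀ u)
    (hJ : IsKernel μ J) (hg : ∀ᵐ x ∂μ, IsFlux α (g x)) (hu₀ : ∃ M, ∀ x, |u₀ x| ≤ M)
    (hu₀0 : ∀ x, 0 ≤ u₀ x) (hT : 0 ≤ T) :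
    ∃ U, IsStrongSolution μ J g T U ∧ (∀ t x, 0 ≤ U t x) ∧
      ∀ t ∈ Icc 0 T, ∀ x, U t x = |u x t| := by
  have hnonneg : ∀ t, 0 ≤ t → ∀ x, 0 ≤ u x t := fun t ht x => hu.nonneg hJ hg hu₀ hu₀0 x ht
  refine ⟨_, hu.isStrongSolution hJ hg hu₀ hT, fun t => hnonneg _ (projIcc 0 T hT t).2.1,
    fun t ht x => ?_⟩
  rw [IccExtend_of_mem hT _ ht, abs_of_nonneg (hnonneg t ht.1 x)]

end NegInvariant

variable [NormedSpace ℝ E] [FiniteDimensional ℝ E] [BorelSpace E] [μ.IsAddHaarMeasure]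
  {α : NNReal} {β : ℝ}

lemma antitoneOn_lintegral (hu : IsNonlocalSolution μ J g u₀ u) (hJ : IsKernel μ J)
    (hg : ∀ᵐ x ∂μ, IsFlux α (g x)) (hu₀ : ∃ M, ∀ x, |u₀ x| ≤ M) (hu₀0 : ∀ x, 0 ≤ u₀ x)
    (hβ : ∀ᵐ x ∂μ, ∀ s, g x s ≤ β * s) :
    AntitoneOn (fun t => ∫⁻ x, ENNReal.ofReal |u x t| ∂μ) (Ici 0) := by
  intro s hs t ht hst
  obtain ⟨U, hU, hU0, hUu⟩ := hu.exists_isStrongSolution_nonneg hJ hg hu₀ hu₀0 ht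
  simpa only [hUu s ⟨hs, hst⟩, hUu t ⟨ht, le_rfl⟩] using
    hU.lintegral_le_of_flux_le hJ hg hU0 hβ hs hst le_rfl

lemma monotoneOn_lintegral (hu : IsNonlocalSolution μ J g u₀ u) (hJ : IsKernel μ J)
    (hg : ∀ᵐ x ∂μ, IsFlux α (g x)) (hu₀ : ∃ M, ∀ x, |u₀ x| ≤ M) (hu₀0 : ∀ x, 0 ≤ u₀ x)
    (hβ : ∀ᵐ x ∂μ, ∀ s, β * s ≤ g x s) :
    MonotoneOn (fun t => ∫⁻ x, ENNReal.ofReal |u x t| ∂μ) (Ici 0) := by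
  intro s hs t ht hst
  obtain ⟨U, hU, hU0, hUu⟩ := hu.exists_isStrongSolution_nonneg hJ hg hu₀ hu₀0 ht
  simpa only [hUu s ⟨hs, hst⟩, hUu t ⟨ht, le_rfl⟩] using
    hU.lintegral_le_of_le_flux hJ hg hU0 hβ hs hst le_rfl

end IsNonlocalSolution

end NonlocalSolution

theorem L1_norm_monotone_general {E : Type*} [NormedAddCommGroup E] [NormedSpace ℝ E]
    [FiniteDimensional ℝ E] [MeasurableSpace E] [BorelSpace E] {μ : Measure E}
    [μ.IsAddHaarMeasure] {J : E → ℝ} (hJ : IsKernel μ J) {α : NNReal} {g : E → ℝ → ℝ}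
    (hg : ∀ᵐ x ∂μ, IsFlux α (g x)) {u₀ : E → ℝ} (hu₀b : ∃ M, ∀ x, |u₀ x| ≤ M)
    (hu₀0 : ∀ x, 0 ≤ u₀ x) {u : E → ℝ → ℝ} (hu : IsNonlocalSolution μ J g u₀ u) (β : ℝ) :
    ((∀ᵐ x ∂μ, ∀ s, g x s ≤ β * s) → Integrable u₀ μ →
      (∀ t ∈ Ici (0 : ℝ), Integrable (fun x => u x t) μ) ∧
      AntitoneOn (fun t => ∫ x, |u x t| ∂μ) (Ici (0 : ℝ)) ∧
      ∀ t ∈ Ici (0 : ℝ), (∫ x, |u x t| ∂μ) ≤ ∫ x, |u₀ x| ∂μ) ∧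
    ((∀ᵐ x ∂μ, ∀ s, β * s ≤ g x s) →
      MonotoneOn (fun t => ∫⁻ x, ENNReal.ofReal |u x t| ∂μ) (Ici (0 : ℝ)) ∧
      ∀ t ∈ Ici (0 : ℝ), (∫⁻ x, ENNReal.ofReal |u₀ x| ∂μ) ≤
        ∫⁻ x, ENNReal.ofReal |u x t| ∂μ) := by
  obtain rfl : (fun x => u x 0) = u₀ := funext hu.initial
  refine ⟨fun hβ hu₀int => ?_, fun hβ => ?_⟩
  · have hanti := hu.antitoneOn_lintegral hJ hg hu₀b hu₀0 hβ
    have hint : ∀ t ∈ Ici (0 : ℝ), Integrable (fun x => u x t) μ := fun t ht =>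
      integrable_of_lintegral_le (hu.continuous t ht).aestronglyMeasurable hu₀int
        (hanti self_mem_Ici ht ht)
    have hanti' : AntitoneOn (fun t => ∫ x, |u x t| ∂μ) (Ici 0) := fun s hs t ht hst =>
      integral_abs_le_of_lintegral_le (hint t ht) (hint s hs) (hanti hs ht hst)
    exact ⟨hint, hanti', fun t ht => hanti' self_mem_Ici ht ht⟩
  · have hmono := hu.monotoneOn_lintegral hJ hg hu₀b hu₀0 hβ
    exact ⟨hmono, fun t ht => hmono self_mem_Ici ht ht⟩

lemma HypJ.isKernel {N : ℕ} {J : (Fin N → ℝ) → ℝ} (hJ : HypJ N J) : IsKernel volume J := by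
  obtain ⟨hnonneg, -, hcont, hsupp, -⟩ := hJ
  exact ⟨hnonneg, hcont.integrable_of_hasCompactSupport hsupp,
    hsupp.isCompact.isBounded.subset (subset_tsupport J)⟩

lemma HypG.exists_isFlux {N : ℕ} {G : (Fin N → ℝ) → ℝ → ℝ} (hG : HypG N G) :
    ∃ α : NNReal, ∀ᵐ x, IsFlux α fun s => G x s * s := by
  obtain ⟨-, -, α₁, α₂, hα₁, hα, hG⟩ := hG
  have hα₂ : 0 ≤ α₂ := hα₁.le.trans hα
  refine ⟨⟨α₂, hα₂⟩, hG.mono fun x hx => ?_⟩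
  have hmono : Monotone fun s => G x s * s := monotone_iff_forall_lt.2 fun σ s hσs =>
    sub_nonneg.1 ((mul_nonneg hα₁.le (sub_nonneg.2 hσs.le)).trans (hx s σ hσs).1)
  refine ⟨mul_zero _, hmono, LipschitzWith.of_le_add_mul _ fun s σ => ?_⟩
  rcases le_or_gt s σ with hsσ | hσs
  · exact (hmono hsσ).trans (le_add_of_nonneg_right (by positivity))
  · rw [Real.dist_eq, abs_of_pos (sub_pos.2 hσs)]
    exact sub_le_iff_le_add'.1 (hx s σ hσs).2

lemma CauchySolutionI.isNonlocalSolution {N : ℕ} {J : (Fin N → ℝ) → ℝ}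
    {G : (Fin N → ℝ) → ℝ → ℝ} {u₀ : (Fin N → ℝ) → ℝ} {u : (Fin N → ℝ) → ℝ → ℝ}
    (hu : CauchySolutionI N J G u₀ u) :
    IsNonlocalSolution volume J (fun x s => G x s * s) u₀ u where
  continuous := hu.1
  tendstoUniformly := hu.2.1
  initial := hu.2.2.1
  integral_eq := Eventually.of_forall fun x t ht => by
    simpa only [mul_assoc, mul_comm (G x _)] using hu.2.2.2 x t ht

/-- **Monotonicity of the `L¹` norm of a nonnegative solution of the Cauchy problem (C)**:
the `L¹` norm decreases in the absorption case and increases in the reaction case. -/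
theorem L1_norm_monotone
    (N : ℕ) (hN : 1 ≤ N)
    (J : (Fin N → ℝ) → ℝ) (hJ : HypJ N J)
    (G : (Fin N → ℝ) → ℝ → ℝ) (hG : HypG N G)
    (u₀ : (Fin N → ℝ) → ℝ) (hu₀c : Continuous u₀) (hu₀b : ∃ M, ∀ x, |u₀ x| ≤ M)
    (hu₀int : Integrable u₀) (hu₀pos : ∀ x, 0 ≤ u₀ x)
    (u : (Fin N → ℝ) → ℝ → ℝ) (hu : CauchySolutionI N J G u₀ u) :
    ((∃ β > (0 : ℝ), ∀ᵐ x : Fin N → ℝ, ∀ s : ℝ, G x s * s ≤ β * s) →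
      (∀ t ∈ Ici (0 : ℝ), Integrable fun x => u x t) ∧
      AntitoneOn (fun t => ∫ x, |u x t|) (Ici (0 : ℝ)) ∧
      ∀ t ∈ Ici (0 : ℝ), (∫ x, |u x t|) ≤ ∫ x, |u₀ x|) ∧
    ((∃ β > (0 : ℝ), ∀ᵐ x : Fin N → ℝ, ∀ s : ℝ, β * s ≤ G x s * s) →
      MonotoneOn (fun t => ∫⁻ x, ENNReal.ofReal |u x t|) (Ici (0 : ℝ)) ∧
      ∀ t ∈ Ici (0 : ℝ), (∫⁻ x, ENNReal.ofReal |u₀ x|) ≤ ∫⁻ x, ENNReal.ofReal |u x t|) := by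
  obtain ⟨α, hα⟩ := hG.exists_isFlux
  have key := L1_norm_monotone_general hJ.isKernel hα hu₀b hu₀pos hu.isNonlocalSolution
  exact ⟨fun ⟨β, _, hβ⟩ => (key β).1 hβ hu₀int, fun ⟨β, _, hβ⟩ => (key β).2 hβ⟩
end
end
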